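/- (Hu; Chen; He–Togbé) Let f be a positive integer with f > 1. Then the only solution in positive integers (x,y,z) of the equation f^x + (3f^2 − 1)^y = (4f^2 − 1)^z is (x,y,z) = (2,1,1). -/

import Mathlib

/-!
Write `F = f ^ 2`, `B = 3 F - 1` and `C = 4 F - 1`, so that the equation is `f ^ x + B ^ y = C ^ z`.

Modulo `F` one gets `x ≥ 2` and `y ≡ z` modulo `2`. If `y` and `z` are both even, the factorization
of `C ^ z - B ^ y` as a difference of squares forces the smaller factor to be `2`, which is absurd
(`not_even_exponents`). So `y` and `z` are odd. For even `f`, reduction modulo `f ^ 3` gives `x = 2`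
(`exponent_eq_two_of_even`); for odd `f`, reduction modulo `8` and the Jacobi symbol modulo `2 f - 1`
give `y = 1` (`exponent_eq_one_of_odd`). When `z = 1` the conclusion is immediate, so it remains to
exclude `z > 1` in

* `F + B ^ y = C ^ z` with `f` even, and
* `f ^ x + B = C ^ z` with `f` odd.

In both cases a small number is the difference of two powers with large exponents: expanding
`(4 F - 1) ^ z` in powers of `F` gives `z > F` in the first case and `32 z ≥ F ^ 3` in the second. This
contradicts `no_close_powers`, a lower bound for the distance between `U ^ m` and `V ^ n`, that is, for
a linear form in two logarithms, as soon as `f ≥ 1024` in the first case and `f ≥ 17` in the second.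
The bound is proved with Laurent's interpolation determinants: the determinant is nonzero by the zero
estimate `exists_minor`, hence at least `1`, being an integer after rescaling, while it is small by the
analytic estimate `abs_interpolation_det_le` if the two powers are too close.

For the remaining `f`, the exponent `y` (respectively `z`) is determined modulo some odd `m` with
`m ∣ C` (respectively modulo `F`) by the equation modulo `m ^ 2` (respectively `F ^ 2`), and this is
contradicted modulo an auxiliary number `P`. The moduli are listed in tables, and the kernel checks
them (`certTwo`, `certOne`).
-/

/-! ### Majorants and determinants of analytic functions -/

/-- `q` majorizes `p` coefficientwise. -/
def Majorizes (q p : Polynomial ℝ) : Prop := ∀ n, |p.coeff n| ≤ q.coeff n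

lemma Majorizes.nonneg {q p : Polynomial ℝ} (h : Majorizes q p) (n : ℕ) : 0 ≤ q.coeff n :=
  (abs_nonneg _).trans (h n)

lemma Majorizes.mul {q₁ p₁ q₂ p₂ : Polynomial ℝ} (h₁ : Majorizes q₁ p₁) (h₂ : Majorizes q₂ p₂) :
    Majorizes (q₁ * q₂) (p₁ * p₂) := by
  intro n
  rw [Polynomial.coeff_mul, Polynomial.coeff_mul]
  refine (Finset.abs_sum_le_sum_abs _ _).trans (Finset.sum_le_sum fun x _ => ?_)
  rw [abs_mul]
  exact mul_le_mul (h₁ _) (h₂ _) (abs_nonneg _) (h₁.nonneg _)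

lemma majorizes_C (c : ℝ) : Majorizes (Polynomial.C |c|) (Polynomial.C c) := by
  intro n
  rw [Polynomial.coeff_C, Polynomial.coeff_C]
  split_ifs <;> simp

lemma Majorizes.prod {ι : Type*} (s : Finset ι) {q p : ι → Polynomial ℝ}
    (h : ∀ i ∈ s, Majorizes (q i) (p i)) : Majorizes (∏ i ∈ s, q i) (∏ i ∈ s, p i) := by
  classical
  induction s using Finset.induction_on with
  | empty => simpa using majorizes_C 1
  | insert a s ha ih =>
    rw [Finset.prod_insert ha, Finset.prod_insert ha]
    exact (h a (Finset.mem_insert_self _ _)).mul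
      (ih fun i hi => h i (Finset.mem_insert_of_mem hi))

lemma Majorizes.natDegree_le {q p : Polynomial ℝ} (h : Majorizes q p) :
    p.natDegree ≤ q.natDegree := by
  refine Polynomial.natDegree_le_iff_coeff_eq_zero.2 fun n hn => ?_
  have := h n
  rw [Polynomial.coeff_eq_zero_of_natDegree_lt hn] at this
  exact abs_nonpos_iff.1 this

lemma Majorizes.abs_eval_le {q p : Polynomial ℝ} (h : Majorizes q p) {u ρ : ℝ} (hρ : 1 ≤ ρ)
    (hu : |u| ≤ 1) : |p.eval u| ≤ q.eval ρ := by
  rw [Polynomial.eval_eq_sum_range' (Nat.lt_succ_of_le h.natDegree_le),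
    Polynomial.eval_eq_sum_range]
  refine (Finset.abs_sum_le_sum_abs _ _).trans (Finset.sum_le_sum fun n _ => ?_)
  rw [abs_mul, abs_pow]
  exact mul_le_mul (h n) ((pow_le_one₀ (abs_nonneg _) hu).trans (one_le_pow₀ hρ))
    (by positivity) (h.nonneg n)

/-- If at most `t + 1` of the `N` weights are `≤ t`, for every `t < N`, then the weights add up to
at least `0 + 1 + ⋯ + (N - 1)`. -/
lemma sum_weights_ge {ι : Type*} [Fintype ι] (w : ι → ℕ)
    (h : ∀ t < Fintype.card ι, (Finset.univ.filter fun j => w j ≤ t).card ≤ t + 1) :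
    Fintype.card ι * (Fintype.card ι - 1) / 2 ≤ ∑ j, w j := by
  set N := Fintype.card ι with hN
  have h1 : ∀ j, ∑ t ∈ Finset.range N, (if t < w j then 1 else 0) ≤ w j := by
    intro j
    rw [Finset.sum_ite, Finset.sum_const_zero, add_zero, Finset.sum_const, smul_eq_mul, mul_one]
    refine (Finset.card_le_card (t := Finset.range (w j)) ?_).trans (by simp)
    intro t ht
    simpa using (Finset.mem_filter.1 ht).2
  refine le_trans ?_ (Finset.sum_le_sum fun j _ => h1 j)
  rw [Finset.sum_comm, ← Finset.sum_range_id_mul_two, Nat.mul_div_cancel _ two_pos,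
    ← Finset.sum_range_reflect]
  refine Finset.sum_le_sum fun t ht => ?_
  rw [Finset.sum_ite, Finset.sum_const_zero, add_zero, Finset.sum_const, smul_eq_mul, mul_one]
  have h2 := h t (Finset.mem_range.1 ht)
  have h3 := Finset.card_filter_add_card_filter_not (s := (Finset.univ : Finset ι))
    (fun j => w j ≤ t)
  simp only [not_le, Finset.card_univ] at h3
  omega

/-- Determinants are small when all rows are the values of the same analytic functions: expanding
each column into monomials, only terms with pairwise distinct exponents survive. -/
lemma abs_det_le {ι : Type*} [Fintype ι] [DecidableEq ι] (ρ : ℝ) (hρ : 1 ≤ ρ)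
    (p q : ι → Polynomial ℝ) (hq : ∀ j, Majorizes (q j) (p j)) (u : ι → ℝ) (hu : ∀ i, |u i| ≤ 1)
    (η : ι → ι → ℝ) (hη : ∀ i j, |η i j| * ρ ^ Fintype.card ι ≤ 1) :
    |(Matrix.of fun i j => (p j).eval (u i) * (1 + η i j)).det| *
      ρ ^ (Fintype.card ι * (Fintype.card ι - 1) / 2) ≤
      (Fintype.card ι).factorial * ∏ j, (2 * (q j).eval ρ) := by
  classical
  set N := Fintype.card ι with hN
  obtain ⟨d, hd⟩ : ∃ d, ∀ j, (q j).natDegree < d :=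
    ⟨Finset.univ.sup (fun j => (q j).natDegree) + 1, fun j => Nat.lt_succ_of_le
      (Finset.le_sup (f := fun j => (q j).natDegree) (Finset.mem_univ j))⟩
  have hρ0 : (0 : ℝ) < ρ := by linarith
  -- the column `j` is the sum over `κ` of the vectors `col j κ`
  let col : ι → Option (Fin d) → ι → ℝ := fun j κ i =>
    κ.elim ((p j).eval (u i) * η i j) fun n => (p j).coeff n * u i ^ (n : ℕ)
  let wt : Option (Fin d) → ℕ := fun κ => κ.elim N fun n => n
  let g : ι → Option (Fin d) → ℝ := fun j κ =>
    κ.elim ((q j).eval ρ) fun n => (q j).coeff n * ρ ^ (n : ℕ)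
  have hcol : ∀ j κ i, |col j κ i| * ρ ^ wt κ ≤ g j κ := by
    intro j κ i
    rcases κ with _ | n
    · simp only [col, wt, g, Option.elim]
      rw [abs_mul, mul_assoc]
      calc _ ≤ |(p j).eval (u i)| * 1 := by gcongr; exact hη i j
        _ ≤ _ := by rw [mul_one]; exact (hq j).abs_eval_le hρ (hu i)
    · simp only [col, wt, g, Option.elim]
      rw [abs_mul, abs_pow]
      calc _ ≤ (q j).coeff n * 1 * ρ ^ (n : ℕ) := by
            have := (hq j).nonneg n
            gcongr
            · exact hq j n
            · exact pow_le_one₀ (abs_nonneg _) (hu i)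
        _ = _ := by rw [mul_one]
  have hg0 : ∀ j κ, 0 ≤ g j κ := fun j κ => by
    obtain ⟨i⟩ : Nonempty ι := ⟨j⟩
    exact le_trans (by positivity) (hcol j κ i)
  have hsum : ∀ j, ∑ κ, g j κ = 2 * (q j).eval ρ := by
    intro j
    rw [Fintype.sum_option]
    simp only [g, Option.elim]
    rw [Fin.sum_univ_eq_sum_range (fun n => (q j).coeff n * ρ ^ n) d,
      ← Polynomial.eval_eq_sum_range' (hd j)]
    ring
  have hA : (Matrix.of fun i j => (p j).eval (u i) * (1 + η i j)).det =
      ∑ r : ι → Option (Fin d), (Matrix.of fun j => col j (r j)).det := by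
    rw [← Matrix.det_transpose]
    have := (Matrix.detRowAlternating (n := ι) (R := ℝ)).toMultilinearMap.map_sum
      (fun j κ => col j κ)
    simp only [AlternatingMap.coe_multilinearMap] at this
    refine Eq.trans ?_ this
    unfold Matrix.det
    congr 1
    ext j i
    simp only [Matrix.transpose_apply, Matrix.of_apply, Finset.sum_apply]
    rw [Fintype.sum_option]
    simp only [col, Option.elim]
    rw [Fin.sum_univ_eq_sum_range (fun n => (p j).coeff n * u i ^ n) d,
      ← Polynomial.eval_eq_sum_range' ((hq j).natDegree_le.trans_lt (hd j))]
    ring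
  have hterm : ∀ r : ι → Option (Fin d),
      |(Matrix.of fun j => col j (r j)).det| * ρ ^ (N * (N - 1) / 2) ≤
        N.factorial * ∏ j, g j (r j) := by
    intro r
    have hG : (0 : ℝ) ≤ N.factorial * ∏ j, g j (r j) :=
      mul_nonneg (by positivity) (Finset.prod_nonneg fun j _ => hg0 _ _)
    by_cases hr : ∃ j j', j ≠ j' ∧ ∃ n, r j = some n ∧ r j' = some n
    -- two proportional columns
    · obtain ⟨j, j', hne, n, h1, h2⟩ := hr
      have hz : (Matrix.of fun j => col j (r j)).det = 0 := by
        by_cases hc : (p j').coeff n = 0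
        · refine Matrix.det_eq_zero_of_row_eq_zero j' fun i => ?_
          simp [col, h2, hc]
        · have hrow : Matrix.of (fun j => col j (r j)) = (Matrix.of fun j => col j (r j)).updateRow
              j (((p j).coeff n / (p j').coeff n) • (Matrix.of fun j => col j (r j)) j') := by
            conv_lhs => rw [← Matrix.updateRow_eq_self (Matrix.of fun j => col j (r j)) j]
            congr 1
            ext i
            simp only [Matrix.of_apply, Pi.smul_apply, smul_eq_mul, col, h1, h2, Option.elim]
            field_simp
          rw [hrow, Matrix.det_updateRow_smul]
          rw [Matrix.det_zero_of_row_eq hne, mul_zero]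
          ext i
          rw [Matrix.updateRow_self, Matrix.updateRow_ne hne.symm]
      rw [hz]
      simpa using hG
    · push Not at hr
      have hw : N * (N - 1) / 2 ≤ ∑ j, wt (r j) := by
        refine sum_weights_ge _ fun t ht => ?_
        rw [← Finset.card_range (t + 1)]
        refine Finset.card_le_card_of_injOn (fun j => wt (r j)) ?_ ?_
        · intro j hj
          simpa [Nat.lt_succ_iff] using hj
        · intro j hj j' hj' hjj
          by_contra hne
          simp only [Finset.coe_filter, Finset.mem_univ, true_and, Set.mem_ofPred_eq] at hj hj'
          rcases h1 : r j with _ | n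
          · rw [h1] at hj
            simp only [wt, Option.elim] at hj
            omega
          rcases h2 : r j' with _ | n'
          · rw [h2] at hj'
            simp only [wt, Option.elim] at hj'
            omega
          simp only [h1, h2, wt, Option.elim] at hjj
          have : n = n' := Fin.ext hjj
          subst this
          exact hr j j' hne n h1 h2
      calc |(Matrix.of fun j => col j (r j)).det| * ρ ^ (N * (N - 1) / 2)
          ≤ (∑ σ : Equiv.Perm ι, ∏ j, |col j (r j) (σ j)|) * ρ ^ ∑ j, wt (r j) := by
            have h1 : |(Matrix.of fun j => col j (r j)).det| ≤
                ∑ σ : Equiv.Perm ι, ∏ j, |col j (r j) (σ j)| := by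
              rw [← Matrix.det_transpose, Matrix.det_apply]
              refine (Finset.abs_sum_le_sum_abs _ _).trans (Finset.sum_le_sum fun σ _ => ?_)
              rw [Units.smul_def, zsmul_eq_mul, abs_mul, Finset.abs_prod]
              have : |(((Equiv.Perm.sign σ : ℤˣ) : ℤ) : ℝ)| = 1 := by
                rcases Int.units_eq_one_or (Equiv.Perm.sign σ) with h | h <;> simp [h]
              rw [this, one_mul]
              simp
            exact mul_le_mul h1 (pow_le_pow_right₀ hρ hw) (by positivity)
              (Finset.sum_nonneg fun σ _ => Finset.prod_nonneg fun j _ => abs_nonneg _)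
        _ = ∑ σ : Equiv.Perm ι, ∏ j, (|col j (r j) (σ j)| * ρ ^ wt (r j)) := by
            rw [Finset.sum_mul]
            refine Finset.sum_congr rfl fun σ _ => ?_
            rw [Finset.prod_mul_distrib, Finset.prod_pow_eq_pow_sum]
        _ ≤ ∑ σ : Equiv.Perm ι, ∏ j, g j (r j) :=
            Finset.sum_le_sum fun σ _ => Finset.prod_le_prod (fun j _ => by positivity)
              fun j _ => hcol _ _ _
        _ = _ := by
            rw [Finset.sum_const, Finset.card_univ, Fintype.card_perm, nsmul_eq_mul]
  calc _ ≤ (∑ r : ι → Option (Fin d), |(Matrix.of fun j => col j (r j)).det|) *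
        ρ ^ (N * (N - 1) / 2) := by
        rw [hA]
        gcongr
        exact Finset.abs_sum_le_sum_abs _ _
    _ ≤ ∑ r : ι → Option (Fin d), N.factorial * ∏ j, g j (r j) := by
        rw [Finset.sum_mul]
        exact Finset.sum_le_sum fun r _ => hterm r
    _ = _ := by
        rw [← Finset.mul_sum, ← Fintype.prod_sum]
        simp only [hsum]

/-! ### Interpolation determinants for binomials times exponentials -/

/-- The sum of the terms of degree less than `M` of the Taylor series of `u ↦ exp (x * u)`. -/
noncomputable def expTaylor (x : ℝ) (M : ℕ) : Polynomial ℝ :=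
  ∑ n ∈ Finset.range M, Polynomial.C (x ^ n / n.factorial) * Polynomial.X ^ n

lemma expTaylor_coeff (x : ℝ) (M n : ℕ) :
    (expTaylor x M).coeff n = if n < M then x ^ n / n.factorial else 0 := by
  simp [expTaylor, Polynomial.coeff_C_mul, Polynomial.coeff_X_pow]

lemma expTaylor_majorizes (x : ℝ) (M : ℕ) : Majorizes (expTaylor |x| M) (expTaylor x M) := by
  intro n
  rw [expTaylor_coeff, expTaylor_coeff]
  split_ifs
  · rw [abs_div, abs_pow, Nat.abs_cast]
  · simp

lemma expTaylor_eval (x u : ℝ) (M : ℕ) :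
    (expTaylor x M).eval u = ∑ n ∈ Finset.range M, (x * u) ^ n / n.factorial := by
  simp only [expTaylor, Polynomial.eval_finsetSum, Polynomial.eval_mul, Polynomial.eval_C,
    Polynomial.eval_pow, Polynomial.eval_X]
  exact Finset.sum_congr rfl fun n _ => by rw [mul_pow]; ring

open Filter Topology in
lemma expTaylor_tendsto (x u : ℝ) :
    Tendsto (fun M => (expTaylor x M).eval u) atTop (𝓝 (Real.exp (x * u))) := by
  simp only [expTaylor_eval]
  rw [Real.exp_eq_exp_ℝ]
  exact (NormedSpace.expSeries_div_hasSum_exp (x * u)).tendsto_sum_nat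

/-- The polynomial `u ↦ (w.choose k)`, where `w = (u + 1) * W / 2`. -/
noncomputable def choosePoly (W : ℝ) (k : ℕ) : Polynomial ℝ :=
  Polynomial.C ((k.factorial : ℝ)⁻¹) * ∏ i ∈ Finset.range k,
    (Polynomial.C (W / 2) * Polynomial.X + Polynomial.C (W / 2 - i))

/-- A majorant of `choosePoly W k`, valid as long as `k ≤ W + 1`. -/
noncomputable def chooseMaj (W : ℝ) (k : ℕ) : Polynomial ℝ :=
  Polynomial.C ((k.factorial : ℝ)⁻¹) * ∏ _i ∈ Finset.range k,
    (Polynomial.C (W / 2) * Polynomial.X + Polynomial.C (W / 2))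

lemma choosePoly_eval {W : ℝ} (hW : 0 < W) (k w : ℕ) :
    (choosePoly W k).eval (2 * w / W - 1) = (w.choose k : ℝ) := by
  have h1 : (choosePoly W k).eval (2 * w / W - 1) =
      (k.factorial : ℝ)⁻¹ * ∏ i ∈ Finset.range k, ((w : ℝ) - i) := by
    simp only [choosePoly, Polynomial.eval_mul, Polynomial.eval_C, Polynomial.eval_prod,
      Polynomial.eval_add, Polynomial.eval_X]
    congr 1
    refine Finset.prod_congr rfl fun i _ => ?_
    field_simp
    ring
  rw [h1, ← descPochhammer_eval_eq_prod_range, descPochhammer_eval_eq_descFactorial,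
    Nat.descFactorial_eq_factorial_mul_choose]
  push_cast
  field_simp

lemma chooseMaj_majorizes {W : ℝ} (hW : 0 < W) {k : ℕ} (hk : (k : ℝ) ≤ W + 1) :
    Majorizes (chooseMaj W k) (choosePoly W k) := by
  refine Majorizes.mul ?_ (Majorizes.prod _ fun i hi n => ?_)
  · have := majorizes_C ((k.factorial : ℝ)⁻¹)
    rwa [abs_of_nonneg (by positivity)] at this
  · have hi' : (i : ℝ) + 1 ≤ k := by exact_mod_cast Finset.mem_range.1 hi
    have hi0 : (0 : ℝ) ≤ i := i.cast_nonneg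
    rcases n with _ | _ | n
    · simp only [Polynomial.coeff_add, Polynomial.mul_coeff_zero, Polynomial.coeff_X_zero,
        Polynomial.coeff_C_zero, mul_zero, zero_add]
      rw [abs_le]
      constructor <;> linarith
    · simp [abs_of_pos (half_pos hW)]
    · simp

lemma chooseMaj_eval (W : ℝ) (k : ℕ) :
    (chooseMaj W k).eval 8 = (9 / 2 * W) ^ k / k.factorial := by
  simp only [chooseMaj, Polynomial.eval_mul, Polynomial.eval_C, Polynomial.eval_pow,
    Polynomial.eval_add, Polynomial.eval_X, Finset.prod_const, Finset.card_range]
  rw [inv_mul_eq_div]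
  congr 2
  ring

open Filter Topology in
/-- Upper bound for a generalized interpolation determinant whose columns are perturbations of
`w ↦ (w.choose k) * exp ((l - a) * ω * (w / W))`: `abs_det_le` with `ρ = 8` in the variable
`u = 2 * w / W - 1`, the exponential being replaced by its Taylor polynomials and the bound passed
to the limit. -/
lemma abs_interpolation_det_le {a L K : ℕ} (W ω : ℝ) (hW : 0 < W) (hKW : (K : ℝ) ≤ W + 1)
    (hω : 0 ≤ ω) (w : Fin L × Fin K → ℕ) (hw : ∀ i, (w i : ℝ) ≤ W)
    (η : Fin L × Fin K → Fin L × Fin K → ℝ) (hη : ∀ i j, |η i j| * 8 ^ (L * K) ≤ 1) :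
    |(Matrix.of fun i j : Fin L × Fin K => ((w i).choose j.2 : ℝ) *
      Real.exp (((j.1 : ℕ) - (a : ℝ)) * ω * (w i / W)) * (1 + η i j)).det| *
      8 ^ (L * K * (L * K - 1) / 2) ≤
    (L * K).factorial * ∏ j : Fin L × Fin K, (2 * (Real.exp (((j.1 : ℕ) - (a : ℝ)) * ω / 2) *
      Real.exp (4 * |((j.1 : ℕ) - (a : ℝ))| * ω) *
        ((9 / 2 * W) ^ (j.2 : ℕ) / (j.2 : ℕ).factorial))) := by
  let b : Fin L × Fin K → ℝ := fun j => (j.1 : ℕ) - (a : ℝ)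
  let p : ℕ → Fin L × Fin K → Polynomial ℝ := fun M j =>
    Polynomial.C (Real.exp (b j * ω / 2)) * (expTaylor (b j * ω / 2) M * choosePoly W j.2)
  let q : ℕ → Fin L × Fin K → Polynomial ℝ := fun M j =>
    Polynomial.C (Real.exp (b j * ω / 2)) * (expTaylor |b j * ω / 2| M * chooseMaj W j.2)
  let u : Fin L × Fin K → ℝ := fun i => 2 * w i / W - 1
  have hcard : Fintype.card (Fin L × Fin K) = L * K := by simp
  have hpq : ∀ M j, Majorizes (q M j) (p M j) := by
    intro M j
    refine Majorizes.mul ?_ (Majorizes.mul (expTaylor_majorizes _ _) (chooseMaj_majorizes hW ?_))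
    · have := majorizes_C (Real.exp (b j * ω / 2))
      rwa [abs_of_pos (Real.exp_pos _)] at this
    · refine le_trans ?_ hKW
      exact_mod_cast j.2.2.le
  have hu : ∀ i, |u i| ≤ 1 := by
    intro i
    have h1 : (w i : ℝ) / W ≤ 1 := (div_le_one hW).2 (hw i)
    have h2 : 0 ≤ (w i : ℝ) / W := by positivity
    simp only [u, mul_div_assoc]
    rw [abs_le]
    constructor <;> linarith
  have hlim : Tendsto (fun M => |(Matrix.of fun i j : Fin L × Fin K =>
      (p M j).eval (u i) * (1 + η i j)).det| * 8 ^ (L * K * (L * K - 1) / 2)) atTop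
      (𝓝 (|(Matrix.of fun i j : Fin L × Fin K => ((w i).choose j.2 : ℝ) *
      Real.exp (((j.1 : ℕ) - (a : ℝ)) * ω * (w i / W)) * (1 + η i j)).det| *
      8 ^ (L * K * (L * K - 1) / 2))) := by
    refine Tendsto.mul_const _ (Tendsto.abs ?_)
    refine ((continuous_id.matrix_det).tendsto _).comp ?_
    refine tendsto_pi_nhds.2 fun i => tendsto_pi_nhds.2 fun j => ?_
    refine Tendsto.mul_const _ ?_
    have h1 : ((w i).choose j.2 : ℝ) * Real.exp (((j.1 : ℕ) - (a : ℝ)) * ω * (w i / W)) =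
        Real.exp (b j * ω / 2) * (Real.exp (b j * ω / 2 * u i) * (choosePoly W j.2).eval (u i)) := by
      rw [choosePoly_eval hW, ← mul_assoc, ← Real.exp_add, mul_comm]
      congr 2
      simp only [b, u]
      ring
    rw [h1]
    simp only [p, Polynomial.eval_mul, Polynomial.eval_C]
    exact ((expTaylor_tendsto _ _).mul_const _).const_mul _
  refine le_of_tendsto' hlim fun M => ?_
  have h2 := abs_det_le 8 (by norm_num) (p M) (q M) (hpq M) u hu η (by rwa [hcard])
  rw [hcard] at h2
  refine h2.trans ?_
  have h8 : ∀ j, 0 ≤ (q M j).eval 8 := fun j =>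
    (abs_nonneg _).trans ((hpq M j).abs_eval_le (u := 0) (by norm_num) (by norm_num))
  gcongr with j hj
  · exact fun j _ => by have := h8 j; positivity
  · simp only [q, Polynomial.eval_mul, Polynomial.eval_C, chooseMaj_eval]
    rw [← mul_assoc]
    gcongr
    rw [expTaylor_eval]
    refine (Real.sum_le_exp_of_nonneg (by positivity) M).trans (Real.exp_le_exp.2 (le_of_eq ?_))
    rw [abs_div, abs_mul, abs_of_nonneg hω]
    simp only [b]
    norm_num
    ring

lemma sum_sub_center (a : ℕ) :
    ∑ l : Fin (2 * a + 1), (((l : ℕ) : ℝ) - (a : ℝ)) = 0 ∧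
    ∑ l : Fin (2 * a + 1), |((l : ℕ) : ℝ) - (a : ℝ)| = a * (a + 1) := by
  rw [Fin.sum_univ_eq_sum_range (fun l => (l : ℝ) - (a : ℝ)),
    Fin.sum_univ_eq_sum_range (fun l => |(l : ℝ) - (a : ℝ)|)]
  have h1 : ∀ n : ℕ, ∑ i ∈ Finset.range n, (i : ℝ) = n * (n - 1) / 2 := by
    intro n
    induction n with
    | zero => simp
    | succ n ih => rw [Finset.sum_range_succ, ih]; push_cast; ring
  constructor
  · rw [Finset.sum_sub_distrib, h1]
    simp
    ring
  · rw [two_mul, add_assoc, Finset.sum_range_add]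
    have h2 : ∑ x ∈ Finset.range a, |(x : ℝ) - a| = ∑ x ∈ Finset.range a, ((a : ℝ) - x) :=
      Finset.sum_congr rfl fun x hx => by
        have : (x : ℝ) ≤ a := by exact_mod_cast (Finset.mem_range.1 hx).le
        rw [abs_of_nonpos (by linarith)]
        ring
    have h3 : ∑ x ∈ Finset.range (a + 1), |((a + x : ℕ) : ℝ) - a| =
        ∑ x ∈ Finset.range (a + 1), (x : ℝ) :=
      Finset.sum_congr rfl fun x hx => by
        push_cast
        rw [add_sub_cancel_left, abs_of_nonneg (by positivity)]
    rw [h2, h3, Finset.sum_sub_distrib, h1, h1]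
    simp
    ring

lemma succ_pow_le_exp_mul_factorial (n : ℕ) :
    ((n : ℝ) + 1) ^ n ≤ Real.exp n * n.factorial := by
  induction n with
  | zero => simp
  | succ n ih =>
    have h : ((n : ℝ) + 1 + 1) ^ (n + 1) ≤ Real.exp 1 * (n + 1) ^ (n + 1) := by
      have h3 : (n : ℝ) + 1 + 1 ≤ Real.exp (1 / (n + 1)) * (n + 1) := by
        have := Real.add_one_le_exp (1 / ((n : ℝ) + 1))
        calc (n : ℝ) + 1 + 1 = (1 / (n + 1) + 1) * (n + 1) := by field_simp; ring
          _ ≤ _ := by gcongr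
      calc _ ≤ (Real.exp (1 / (n + 1)) * (n + 1)) ^ (n + 1) := by gcongr
        _ = _ := by
          rw [mul_pow, ← Real.exp_nat_mul]
          congr 2
          push_cast
          field_simp
    rw [Nat.factorial_succ]
    push_cast
    calc _ ≤ _ := h
      _ = Real.exp 1 * (n + 1) * ((n : ℝ) + 1) ^ n := by ring
      _ ≤ Real.exp 1 * (n + 1) * (Real.exp n * n.factorial) := by gcongr
      _ = _ := by rw [Real.exp_add]; ring

/-- `∏_{k < K} k!` is at least `(K / 5) ^ (K (K - 1) / 2)`. -/
lemma superfactorial_bound (K : ℕ) :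
    (K : ℝ) ^ (K * (K - 1) / 2) ≤
      5 ^ (K * (K - 1) / 2) * ∏ k ∈ Finset.range K, (k.factorial : ℝ) := by
  induction K with
  | zero => simp
  | succ K ih =>
    rcases Nat.eq_zero_or_pos K with rfl | hK
    · simp
    have hT : (K + 1) * (K + 1 - 1) / 2 = K * (K - 1) / 2 + K := by
      rw [← Finset.sum_range_id, ← Finset.sum_range_id, Finset.sum_range_succ]
    set T := K * (K - 1) / 2 with hTdef
    have h2T : 2 * T + K = K * K := by
      rw [hTdef, ← Finset.sum_range_id, mul_comm 2, Finset.sum_range_id_mul_two]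
      obtain ⟨k, rfl⟩ := Nat.exists_eq_succ_of_ne_zero hK.ne'
      simp
      ring
    have hK0 : (0 : ℝ) < K := by exact_mod_cast hK
    rw [hT, Finset.prod_range_succ]
    -- `(1 + 1 / K) ^ T ≤ e ^ (T / K) = e ^ ((K - 1) / 2)` and `(K + 1) ^ K ≤ e ^ K * K!`
    have h1 : ((K + 1 : ℕ) : ℝ) ^ T ≤ Real.exp ((K - 1) / 2) * (K : ℝ) ^ T := by
      have h3 : ((K + 1 : ℕ) : ℝ) ≤ Real.exp (1 / K) * K := by
        have := Real.add_one_le_exp (1 / (K : ℝ))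
        calc ((K + 1 : ℕ) : ℝ) = (1 / K + 1) * K := by
              push_cast
              field_simp
              ring
          _ ≤ _ := by gcongr
      calc _ ≤ (Real.exp (1 / K) * K) ^ T := by gcongr
        _ = _ := by
          rw [mul_pow, ← Real.exp_nat_mul]
          congr 2
          have : (2 : ℝ) * T + K = K * K := by exact_mod_cast h2T
          field_simp
          linarith
    have h2 : ((K + 1 : ℕ) : ℝ) ^ K ≤ Real.exp K * K.factorial := by
      exact_mod_cast succ_pow_le_exp_mul_factorial K
    have h3 : Real.exp ((K - 1) / 2) * Real.exp K ≤ 5 ^ K := by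
      have h4 : Real.exp (3 / 2) ≤ 5 := by
        have h5 : Real.exp (3 / 2) ^ 2 ≤ 5 ^ 2 := by
          rw [← Real.exp_nat_mul]
          have h6 : Real.exp ((2 : ℕ) * (3 / 2)) = Real.exp 1 ^ 3 := by
            rw [← Real.exp_nat_mul]
            norm_num
          rw [h6]
          calc _ ≤ (2.72 : ℝ) ^ 3 := by
                gcongr
                linarith [Real.exp_one_lt_d9]
            _ ≤ _ := by norm_num
        exact le_of_sq_le_sq h5 (by norm_num)
      calc _ ≤ Real.exp (K * (3 / 2)) := by
            rw [← Real.exp_add]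
            gcongr
            linarith
        _ = Real.exp (3 / 2) ^ K := Real.exp_nat_mul _ _
        _ ≤ _ := by gcongr
    calc _ = ((K + 1 : ℕ) : ℝ) ^ T * ((K + 1 : ℕ) : ℝ) ^ K := pow_add _ _ _
      _ ≤ (Real.exp ((K - 1) / 2) * (K : ℝ) ^ T) * (Real.exp K * K.factorial) := by gcongr
      _ = (Real.exp ((K - 1) / 2) * Real.exp K) * (K : ℝ) ^ T * K.factorial := by ring
      _ ≤ 5 ^ K * (5 ^ T * ∏ k ∈ Finset.range K, (k.factorial : ℝ)) * K.factorial := by gcongr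
      _ = _ := by ring

/-- The product of the column bounds in `abs_interpolation_det_le`; the factors
`exp ((l - a) * ω / 2)` cancel by the symmetry of the range of `l`. -/
lemma prod_column_le {a K : ℕ} (hK : 0 < K) (W ω : ℝ) (hW : 0 < W) :
    ∏ j : Fin (2 * a + 1) × Fin K, (2 * (Real.exp (((j.1 : ℕ) - (a : ℝ)) * ω / 2) *
      Real.exp (4 * |((j.1 : ℕ) - (a : ℝ))| * ω) *
        ((9 / 2 * W) ^ (j.2 : ℕ) / (j.2 : ℕ).factorial))) ≤
    2 ^ ((2 * a + 1) * K) * Real.exp (4 * (a * (a + 1)) * ω) ^ K *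
      ((45 / 2 * W / K) ^ (K * (K - 1) / 2)) ^ (2 * a + 1) := by
  have hK0 : (0 : ℝ) < K := by exact_mod_cast hK
  have h1 : ∏ k : Fin K, ((9 / 2 * W) ^ (k : ℕ) / (k : ℕ).factorial) ≤
      (45 / 2 * W / K) ^ (K * (K - 1) / 2) := by
    rw [Fin.prod_univ_eq_prod_range (fun k => (9 / 2 * W) ^ k / (k.factorial : ℝ)),
      Finset.prod_div_distrib, Finset.prod_pow_eq_pow_sum, Finset.sum_range_id,
      div_le_iff₀ (Finset.prod_pos fun k _ => by positivity)]
    have h2 := superfactorial_bound K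
    have h3 : 45 / 2 * W / K = 9 / 2 * W * (5 / K) := by ring
    rw [h3, mul_pow _ (5 / (K : ℝ)), mul_assoc ((9 / 2 * W) ^ _)]
    have h4 : 1 ≤ (5 / (K : ℝ)) ^ (K * (K - 1) / 2) *
        ∏ k ∈ Finset.range K, (k.factorial : ℝ) := by
      rw [div_pow, div_mul_eq_mul_div, le_div_iff₀ (by positivity), one_mul]
      exact h2
    exact le_mul_of_one_le_right (by positivity) h4
  have h5 : ∏ l : Fin (2 * a + 1), (Real.exp (((l : ℕ) - (a : ℝ)) * ω / 2) *
      Real.exp (4 * |((l : ℕ) - (a : ℝ))| * ω)) = Real.exp (4 * (a * (a + 1)) * ω) := by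
    rw [Finset.prod_mul_distrib, ← Real.exp_sum, ← Real.exp_sum, ← Finset.sum_div,
      ← Finset.sum_mul, ← Finset.sum_mul, ← Finset.mul_sum, (sum_sub_center a).1,
      (sum_sub_center a).2]
    simp
  have h6 : ∏ j : Fin (2 * a + 1) × Fin K, (2 * (Real.exp (((j.1 : ℕ) - (a : ℝ)) * ω / 2) *
      Real.exp (4 * |((j.1 : ℕ) - (a : ℝ))| * ω) *
        ((9 / 2 * W) ^ (j.2 : ℕ) / (j.2 : ℕ).factorial))) =
      2 ^ ((2 * a + 1) * K) * Real.exp (4 * (a * (a + 1)) * ω) ^ K *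
      (∏ k : Fin K, ((9 / 2 * W) ^ (k : ℕ) / (k : ℕ).factorial)) ^ (2 * a + 1) := by
    rw [Finset.prod_mul_distrib, Finset.prod_mul_distrib]
    rw [Finset.prod_const, Finset.card_univ, Fintype.card_prod, Fintype.card_fin,
      Fintype.card_fin, Fintype.prod_prod_type, Fintype.prod_prod_type]
    simp only [Finset.prod_const, Finset.card_univ, Fintype.card_fin]
    rw [Finset.prod_pow, h5, ← mul_assoc]
  rw [h6]
  have : 0 ≤ ∏ k : Fin K, ((9 / 2 * W) ^ (k : ℕ) / ((k : ℕ).factorial : ℝ)) :=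
    Finset.prod_nonneg fun k _ => by positivity
  gcongr

/-! ### The zero estimate -/

open Filter Topology in
/-- A determinant of shifts of nonzero polynomials, weighted by distinct geometric progressions,
does not vanish identically: after dividing by the leading powers of the variable it tends to a
Vandermonde determinant times the product of the leading coefficients. -/
lemma det_shift_ne_zero {t : ℕ} (P : Fin t → Polynomial ℝ) (hP : ∀ j, P j ≠ 0) (n : ℝ)
    (v : Fin t → ℝ) (hv : Function.Injective v) :
    (Matrix.of fun i j : Fin t =>
      ((P j).comp (Polynomial.X + Polynomial.C (n * (i : ℕ)))) *
        Polynomial.C (v j ^ (i : ℕ))).det ≠ 0 := by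
  intro h0
  let d : Fin t → ℕ := fun j => (P j).natDegree
  have hdet : ∀ x : ℝ, (Matrix.of fun i j : Fin t =>
      (P j).eval (x + n * (i : ℕ)) / x ^ d j * v j ^ (i : ℕ)).det = 0 := by
    intro x
    have h1 := congrArg (Polynomial.eval x) h0
    rw [← Polynomial.coe_evalRingHom, RingHom.map_det, map_zero] at h1
    have h2 := Matrix.det_mul_row (fun j => (x ^ d j)⁻¹) ((Polynomial.evalRingHom x).mapMatrix
      (Matrix.of fun i j : Fin t =>
      ((P j).comp (Polynomial.X + Polynomial.C (n * (i : ℕ)))) *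
        Polynomial.C (v j ^ (i : ℕ))))
    rw [h1, mul_zero] at h2
    rw [← h2]
    congr 1
    ext i j
    simp
    ring
  have hlim : Tendsto (fun x : ℝ => (Matrix.of fun i j : Fin t =>
      (P j).eval (x + n * (i : ℕ)) / x ^ d j * v j ^ (i : ℕ)).det) atTop
      (𝓝 (Matrix.of fun i j : Fin t => (P j).leadingCoeff * v j ^ (i : ℕ)).det) := by
    refine ((continuous_id.matrix_det).tendsto _).comp ?_
    refine tendsto_pi_nhds.2 fun i => tendsto_pi_nhds.2 fun j => ?_
    refine Tendsto.mul_const _ ?_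
    have hc : ((P j).comp (Polynomial.X + Polynomial.C (n * (i : ℕ)))).degree =
        (Polynomial.X ^ d j : Polynomial ℝ).degree := by
      rw [Polynomial.degree_X_pow, Polynomial.degree_eq_natDegree, Polynomial.natDegree_comp,
        Polynomial.natDegree_X_add_C, mul_one]
      · intro h
        have h3 := congrArg (fun q => q.comp (Polynomial.X - Polynomial.C (n * (i : ℕ)))) h
        simp [Polynomial.comp_assoc] at h3
        exact hP j h3
    have h4 := Polynomial.div_tendsto_atTop_leadingCoeff_div_of_degree_eq _ _ hc
    rw [Polynomial.leadingCoeff_comp (by rw [Polynomial.natDegree_X_add_C]; exact one_ne_zero),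
      Polynomial.leadingCoeff_X_add_C] at h4
    simpa using h4
  have h5 : (Matrix.of fun i j : Fin t => (P j).leadingCoeff * v j ^ (i : ℕ)).det = 0 := by
    refine tendsto_nhds_unique hlim ?_
    simp only [hdet]
    exact tendsto_const_nhds
  have h6 := Matrix.det_mul_row (fun j => (P j).leadingCoeff) (Matrix.vandermonde v).transpose
  rw [Matrix.det_transpose] at h6
  have h7 : (Matrix.of fun i j : Fin t => (P j).leadingCoeff * v j ^ (i : ℕ)) =
      Matrix.of fun i j => (P j).leadingCoeff * (Matrix.vandermonde v).transpose i j := by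
    ext i j
    simp [Matrix.vandermonde]
  rw [h7, h6] at h5
  rcases mul_eq_zero.1 h5 with h | h
  · obtain ⟨j, -, hj⟩ := Finset.prod_eq_zero_iff.1 h
    exact hP j (Polynomial.leadingCoeff_eq_zero.1 hj)
  · exact Matrix.det_vandermonde_ne_zero_iff.2 hv h

/-- Zero estimate: an exponential polynomial `∑ l, P l (w) * E ^ l` with `deg (P l) < K`, evaluated
at `w = r * n + s * m` and `E = U ^ r * V ^ s`, does not vanish on the whole box `r < R`, `s < S` unless all `P l` are zero.
With `s` fixed, the values at `r, r + 1, …` form a linear system for the powers of `E`; its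
determinant is a polynomial in `w` of degree less than `L * K` with at least `L * K` zeros. The
zeros `r * n + s * m` are distinct because `m` and `n` are coprime and `S ≤ n`. -/
lemma zero_estimate {U V m n L K R S : ℕ} (hU : 2 ≤ U) (hV : 1 ≤ V) (hmn : m.Coprime n)
    (hSn : S ≤ n) (hS : 0 < S) (hbox : L * K ≤ (R + 1 - L) * S) (hK : 0 < K)
    (P : Fin L → Polynomial ℝ) (hdeg : ∀ l, (P l).natDegree < K)
    (hP : ∀ r < R, ∀ s < S, ∑ l, (P l).eval ((r * n + s * m : ℕ) : ℝ) *
      ((U ^ r * V ^ s : ℕ) : ℝ) ^ (l : ℕ) = 0) :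
    ∀ l, P l = 0 := by
  classical
  by_contra hne
  push Not at hne
  let J : Finset (Fin L) := Finset.univ.filter fun l => P l ≠ 0
  set t := J.card with ht
  have htL : t ≤ L := by simpa using J.card_le_univ
  have ht0 : 0 < t := by
    obtain ⟨l, hl⟩ := hne
    exact Finset.card_pos.2 ⟨l, by simp [J, hl]⟩
  let e : Fin t ≃ J := J.equivFin.symm
  let M : Matrix (Fin t) (Fin t) (Polynomial ℝ) := Matrix.of fun i j =>
    ((P (e j)).comp (Polynomial.X + Polynomial.C ((n : ℝ) * (i : ℕ)))) *
      Polynomial.C (((U : ℝ) ^ ((e j : Fin L) : ℕ)) ^ (i : ℕ))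
  have hM : M.det ≠ 0 := by
    refine det_shift_ne_zero (fun j => P (e j)) (fun j => ?_) n
      (fun j => (U : ℝ) ^ ((e j : Fin L) : ℕ)) ?_
    · exact (Finset.mem_filter.1 (e j).2).2
    · intro j j' hj
      have hU1 : (1 : ℝ) < U := by exact_mod_cast hU
      exact e.injective (Subtype.ext (Fin.ext ((pow_right_injective₀ (by linarith) hU1.ne') hj)))
  have hMdeg : M.det.natDegree ≤ t * (K - 1) := by
    rw [Matrix.det_apply]
    refine Polynomial.natDegree_sum_le_of_forall_le _ _ fun σ _ => ?_
    refine (Polynomial.natDegree_smul_le _ _).trans ?_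
    refine (Polynomial.natDegree_prod_le _ _).trans ?_
    calc _ ≤ ∑ _j : Fin t, (K - 1) := Finset.sum_le_sum fun j _ => ?_
      _ = _ := by simp
    simp only [M, Matrix.of_apply]
    refine (Polynomial.natDegree_mul_C_le _ _).trans ?_
    rw [Polynomial.natDegree_comp, Polynomial.natDegree_X_add_C, mul_one]
    have := hdeg (e j)
    omega
  let Z : Finset ℝ := (Finset.range (R + 1 - L) ×ˢ Finset.range S).image
    fun x => ((x.1 * n + x.2 * m : ℕ) : ℝ)
  have hZ : Z.card = (R + 1 - L) * S := by
    rw [Finset.card_image_of_injOn, Finset.card_product, Finset.card_range, Finset.card_range]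
    rintro ⟨r, s⟩ hx ⟨r', s'⟩ hy hxy
    simp only [Finset.coe_product, Finset.coe_range, Set.mem_prod, Set.mem_Iio] at hx hy
    have hxy' : r * n + s * m = r' * n + s' * m := Nat.cast_injective (R := ℝ) hxy
    have hs : s = s' := by
      have h1 : s * m ≡ s' * m [MOD n] := by
        have : (r * n + s * m) % n = (r' * n + s' * m) % n := by rw [hxy']
        simpa [Nat.ModEq, Nat.add_mod] using this
      have h2 : s ≡ s' [MOD n] := Nat.ModEq.cancel_right_of_coprime
        (by rw [Nat.gcd_comm]; exact hmn) h1
      exact h2.eq_of_lt_of_lt (hx.2.trans_le hSn) (hy.2.trans_le hSn)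
    subst hs
    have hr : r * n = r' * n := by omega
    have : r = r' := Nat.eq_of_mul_eq_mul_right (by omega) hr
    rw [this]
  refine hM (Polynomial.eq_zero_of_natDegree_lt_card_of_eval_eq_zero' _ Z ?_ ?_)
  · intro x hx
    obtain ⟨⟨r, s⟩, hrs, rfl⟩ := Finset.mem_image.1 hx
    simp only [Finset.mem_product, Finset.mem_range] at hrs
    rw [← Polynomial.coe_evalRingHom, RingHom.map_det]
    refine Matrix.exists_mulVec_eq_zero_iff.1
      ⟨fun j => ((U ^ r * V ^ s : ℕ) : ℝ) ^ ((e j : Fin L) : ℕ), ?_, ?_⟩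
    · intro h
      have := congrFun h ⟨0, ht0⟩
      simp only [Pi.zero_apply] at this
      have : ((U ^ r * V ^ s : ℕ) : ℝ) = 0 := eq_zero_of_pow_eq_zero this
      have h2 : 0 < U ^ r * V ^ s := by positivity
      have h3 : (0 : ℝ) < ((U ^ r * V ^ s : ℕ) : ℝ) := by exact_mod_cast h2
      exact h3.ne' this
    · ext i
      have h := hP (r + i) (by have := i.2; omega) s hrs.2
      rw [Matrix.mulVec, dotProduct, Pi.zero_apply]
      rw [← h]
      rw [← Finset.sum_subset (Finset.subset_univ J), ← Finset.sum_coe_sort J, ← e.sum_comp]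
      · refine Finset.sum_congr rfl fun j _ => ?_
        simp [M]
        ring_nf
      · intro l _ hl
        have : P l = 0 := by simpa [J] using hl
        simp [this]
  · rw [hZ]
    refine hMdeg.trans_lt (lt_of_lt_of_le ?_ hbox)
    calc t * (K - 1) < t * K := by
          apply Nat.mul_lt_mul_of_pos_left _ ht0
          omega
      _ ≤ L * K := by gcongr

/-- The interpolation matrix has a nonvanishing maximal minor, because by `zero_estimate` no linear
form vanishes on all its rows. -/
lemma exists_minor {U V m n L K R S : ℕ} (hU : 2 ≤ U) (hV : 1 ≤ V) (hmn : m.Coprime n)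
    (hSn : S ≤ n) (hS : 0 < S) (hbox : L * K ≤ (R + 1 - L) * S) (hK : 0 < K) :
    ∃ g : Fin L × Fin K → Fin R × Fin S, (Matrix.of fun i j : Fin L × Fin K =>
      ((((g i).1 * n + (g i).2 * m : ℕ).choose j.2 : ℕ) : ℝ) *
        ((U ^ ((g i).1 : ℕ) * V ^ ((g i).2 : ℕ) : ℕ) : ℝ) ^ (j.1 : ℕ)).det ≠ 0 := by
  classical
  let v : Fin R × Fin S → Fin L × Fin K → ℝ := fun i j =>
    (((i.1 * n + i.2 * m : ℕ).choose j.2 : ℕ) : ℝ) *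
        ((U ^ (i.1 : ℕ) * V ^ (i.2 : ℕ) : ℕ) : ℝ) ^ (j.1 : ℕ)
  have hspan : Submodule.span ℝ (Set.range v) = ⊤ := by
    by_contra hne
    obtain ⟨φ, hφ0, hφ⟩ := Submodule.exists_le_ker_of_lt_top _ (lt_top_iff_ne_top.2 hne)
    let c : Fin L × Fin K → ℝ := fun j => φ (Pi.single j 1)
    have hφc : ∀ x : Fin L × Fin K → ℝ, φ x = ∑ j, x j * c j := by
      intro x
      rw [LinearMap.pi_apply_eq_sum_univ φ x]
      refine Finset.sum_congr rfl fun j _ => ?_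
      simp only [smul_eq_mul, c]
      congr 2
      ext k
      simp [Pi.single_apply, eq_comm]
    -- the polynomial `X.choose k`
    let b : ℕ → Polynomial ℝ := fun k =>
      Polynomial.C ((k.factorial : ℝ)⁻¹) * descPochhammer ℝ k
    have hb : ∀ k w : ℕ, (b k).eval (w : ℝ) = (w.choose k : ℝ) := by
      intro k w
      simp only [b, Polynomial.eval_mul, Polynomial.eval_C]
      rw [descPochhammer_eval_eq_descFactorial, Nat.descFactorial_eq_factorial_mul_choose]
      push_cast
      field_simp
    let P : Fin L → Polynomial ℝ := fun l => ∑ k : Fin K, Polynomial.C (c (l, k)) * b k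
    have hPe : ∀ l (w : ℕ), (P l).eval (w : ℝ) = ∑ k : Fin K, c (l, k) * (w.choose k : ℝ) := by
      intro l w
      simp only [P, Polynomial.eval_finsetSum, Polynomial.eval_mul, Polynomial.eval_C, hb]
    have hP0 := zero_estimate (R := R) hU hV hmn hSn hS hbox hK P ?_ ?_
    · apply hφ0
      have hc : ∀ k : ℕ, ∀ hk : k < K, ∀ l, c (l, ⟨k, hk⟩) = 0 := by
        intro k
        induction k using Nat.strong_induction_on with
        | _ k ih =>
          intro hk l
          have h1 := hPe l k
          rw [hP0 l, Polynomial.eval_zero, Finset.sum_eq_single ⟨k, hk⟩] at h1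
          · simpa using h1.symm
          · intro k' _ hk'
            rcases lt_or_gt_of_ne (fun h => hk' (Fin.ext h) : (k' : ℕ) ≠ k) with h | h
            · rw [ih k' h k'.2 l, zero_mul]
            · rw [Nat.choose_eq_zero_of_lt h]
              simp
          · simp
      refine LinearMap.ext fun x => ?_
      rw [hφc]
      exact Finset.sum_eq_zero fun j _ => by rw [hc j.2 j.2.2 j.1, mul_zero]
    · intro l
      refine lt_of_le_of_lt (b := K - 1) ?_ (by omega)
      refine Polynomial.natDegree_sum_le_of_forall_le _ _ fun k _ => ?_
      refine (Polynomial.natDegree_C_mul_le _ _).trans ?_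
      refine (Polynomial.natDegree_C_mul_le _ _).trans ?_
      rw [descPochhammer_natDegree]
      omega
    · intro r hr s hs
      have h1 : φ (v (⟨r, hr⟩, ⟨s, hs⟩)) = 0 :=
        hφ (Submodule.subset_span ⟨_, rfl⟩)
      rw [hφc, Fintype.sum_prod_type] at h1
      rw [← h1]
      refine Finset.sum_congr rfl fun l _ => ?_
      rw [hPe, Finset.sum_mul]
      refine Finset.sum_congr rfl fun k _ => ?_
      simp only [v]
      ring
  obtain ⟨κ, a, -, hsp, hli⟩ := exists_linearIndependent' ℝ v
  rw [hspan] at hsp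
  let bs : Module.Basis κ ℝ (Fin L × Fin K → ℝ) := Module.Basis.mk hli hsp.ge
  let eq : Fin L × Fin K ≃ κ := (Pi.basisFun ℝ (Fin L × Fin K)).indexEquiv bs
  refine ⟨fun i => a (eq i), ?_⟩
  have hli2 : LinearIndependent ℝ (fun i => v (a (eq i))) :=
    hli.comp _ eq.injective
  have := Matrix.linearIndependent_rows_iff_isUnit (A := Matrix.of fun i => v (a (eq i))).1 hli2
  exact ((Matrix.isUnit_iff_isUnit_det _).1 this).ne_zero

/-! ### A lower bound for the distance between two powers -/

/-- With these parameters the exponent of `2` in the upper bound for the interpolation determinant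
is smaller than the exponent in the gain `8 ^ (N * (N - 1) / 2)`. -/
lemma parameter_bound {a h L K S N ω₂ : ℕ} (ha : 6 ≤ a) (hh : 11 ≤ h) (hL : L = 2 * a + 1)
    (hK : K = 25 * L * h ^ 2) (hS : S = 5 * L * h) (hN : N = L * K)
    (hω₂ : ω₂ = L * h * (10 * h + 1)) :
    ω₂ * a * N + 2 * S * N + N + ω₂ * (4 * (a * (a + 1))) * K +
      (3 * a + 4) * (K * (K - 1) / 2) * L < 3 * (N * (N - 1) / 2) := by
  obtain ⟨a', rfl⟩ := Nat.exists_eq_add_of_le ha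
  obtain ⟨h', rfl⟩ := Nat.exists_eq_add_of_le hh
  have hKpos : 0 < K := by subst hK hL; positivity
  have hNpos : 0 < N := by subst hN hL; positivity
  have e1 : 2 * (K * (K - 1) / 2) + K = K * K := by
    rw [← Finset.sum_range_id, mul_comm 2, Finset.sum_range_id_mul_two]
    obtain ⟨k, rfl⟩ := Nat.exists_eq_succ_of_ne_zero hKpos.ne'
    simp
    ring
  have e2 : 2 * (N * (N - 1) / 2) + N = N * N := by
    rw [← Finset.sum_range_id, mul_comm 2, Finset.sum_range_id_mul_two]
    obtain ⟨k, rfl⟩ := Nat.exists_eq_succ_of_ne_zero hNpos.ne'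
    simp
    ring
  set X := K * (K - 1) / 2
  set Y := N * (N - 1) / 2
  zify at *
  have key : 2 * (6 + a' : ℤ) * ω₂ + 4 * S + 2 +
      8 * (6 + a') * (7 + a') * ((11 + h') * (10 * (11 + h') + 1)) +
      (3 * (6 + a') + 4) * K < 3 * N - 3 := by
    rw [hN, hω₂, hK, hS, hL, ← sub_pos]
    ring_nf
    positivity
  have h3 : ω₂ * K = N * ((11 + h') * (10 * (11 + h') + 1) : ℤ) := by
    rw [hN, hω₂]; ring
  have hNp : (0 : ℤ) < N := hNpos
  have h4 := mul_lt_mul_of_pos_left key hNp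
  have h5 : 2 * (X * L : ℤ) ≤ N * K := by
    have : (2 * X : ℤ) ≤ K * K := by linarith [(Int.natCast_nonneg K : (0 : ℤ) ≤ K)]
    calc 2 * (X * L : ℤ) = L * (2 * X) := by ring
      _ ≤ L * (K * K) := by gcongr
      _ = N * K := by rw [hN]; ring
  have h6 : (3 * (6 + a') + 4) * (2 * (X * L : ℤ)) ≤ (3 * (6 + a') + 4) * (N * K) := by gcongr
  have h7 : ω₂ * (4 * ((6 + a') * (6 + a' + 1))) * K =
      (4 * ((6 + a') * (6 + a' + 1))) * (N * ((11 + h') * (10 * (11 + h') + 1) : ℤ)) := by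
    rw [← h3]; ring
  rw [h7]
  nlinarith

set_option maxHeartbeats 1000000 in
/-- Laurent's interpolation determinant method for two numbers: `U ^ m` and `V ^ n` with coprime
exponents cannot be too close to each other. With `w = r * n + s * m` and `E = U ^ r * V ^ s`, a
nonzero determinant with entries `(w.choose k) * E ^ l` is an integer, hence at least `1` in absolute
value. If `V ^ n / U ^ m` were very close to `1`, then `E` would nearly be a function `exp (c * w)`
of `w` alone, so that the rows would nearly be values of the same analytic functions and the
determinant would be less than `1`. -/
lemma no_close_powers {U V m n D h a : ℕ} (ha : 6 ≤ a) (hh : 11 ≤ h) (hU : 2 ≤ U) (hUV : U ≤ V)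
    (hV : V ≤ 2 ^ h) (hD : 0 < D) (heq : U ^ m + D = V ^ n) (hmn : m.Coprime n) (hm : m ≤ 3 * n)
    (hn : n < 2 ^ (3 * a + 3)) (hbig : D * 8 ^ (25 * (2 * a + 1) ^ 2 * h ^ 2) ≤ U ^ m) : False := by
  obtain ⟨L, hL⟩ : ∃ L, L = 2 * a + 1 := ⟨_, rfl⟩
  obtain ⟨K, hK⟩ : ∃ K, K = 25 * L * h ^ 2 := ⟨_, rfl⟩
  obtain ⟨S, hS⟩ : ∃ S, S = 5 * L * h := ⟨_, rfl⟩
  obtain ⟨N, hN⟩ : ∃ N, N = L * K := ⟨_, rfl⟩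
  obtain ⟨ω₂, hω₂⟩ : ∃ w, w = L * h * (10 * h + 1) := ⟨_, rfl⟩
  have hLpos : 13 ≤ L := by omega
  have hKpos : 0 < K := by subst hK; positivity
  have hSpos : 0 < S := by subst hS; positivity
  have hNpos : 0 < N := by subst hN; positivity
  have hNS : N = S * S := by rw [hN, hK, hS]; ring
  have hN' : 25 * (2 * a + 1) ^ 2 * h ^ 2 = N := by rw [hN, hK, hL]; ring
  rw [hN'] at hbig
  have hω₂' : (2 * S + L) * h = ω₂ := by rw [hω₂, hS]; ring
  have hnum := parameter_bound ha hh hL hK hS hN hω₂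
  obtain ⟨R, hR⟩ : ∃ R, R = S + L - 1 := ⟨_, rfl⟩
  have hVpos : 0 < V := by omega
  -- the exponent `n` is large
  have hn1 : 25 * L ^ 2 * h ≤ n := by
    have h1 : 2 ^ (3 * N) ≤ 2 ^ (h * (3 * n)) := by
      calc 2 ^ (3 * N) = 8 ^ N := by rw [pow_mul]; norm_num
        _ ≤ D * 8 ^ N := Nat.le_mul_of_pos_left _ hD
        _ ≤ U ^ m := hbig
        _ ≤ U ^ (3 * n) := Nat.pow_le_pow_right (by omega) hm
        _ ≤ (2 ^ h) ^ (3 * n) := Nat.pow_le_pow_left (hUV.trans hV) _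
        _ = _ := (pow_mul 2 h (3 * n)).symm
    have h2 : 3 * N ≤ h * (3 * n) := (Nat.pow_le_pow_iff_right one_lt_two).1 h1
    have h3 : h * (25 * L ^ 2 * h) ≤ h * n := by
      have : N = h * (25 * L ^ 2 * h) := by rw [hN, hK]; ring
      rw [← this]
      have : h * (3 * n) = 3 * (h * n) := by ring
      omega
    exact Nat.le_of_mul_le_mul_left h3 (by omega)
  have haS : a * S ≤ n := by
    refine le_trans ?_ hn1
    calc a * S ≤ L * (5 * L * h) := by rw [hS]; exact Nat.mul_le_mul_right _ (by omega)
      _ = 5 * L ^ 2 * h := by ring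
      _ ≤ _ := Nat.mul_le_mul_right _ (Nat.mul_le_mul_right _ (by norm_num))
  have hSn : S ≤ n := le_trans (Nat.le_mul_of_pos_left _ (by omega)) haS
  have hnpos : 0 < n := by omega
  obtain ⟨g, hg⟩ := exists_minor (L := L) (K := K) (R := R) hU hVpos hmn hSn hSpos
    (by rw [← hN, hNS, hR]; exact Nat.mul_le_mul_right _ (by omega)) hKpos
  obtain ⟨W, hW⟩ : ∃ W : ℕ, W = (R - 1) * n + (S - 1) * m := ⟨_, rfl⟩
  have hWn : S * n ≤ W := by
    rw [hW]
    exact le_add_right (Nat.mul_le_mul_right _ (by omega))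
  have hWpos : 0 < W := lt_of_lt_of_le (by positivity) hWn
  have hW0 : (0 : ℝ) < W := by exact_mod_cast hWpos
  have hKW : K ≤ W := by
    refine le_trans ?_ hWn
    calc K = S * (5 * h) := by rw [hK, hS]; ring
      _ ≤ S * n := by
        refine Nat.mul_le_mul_left _ (le_trans ?_ hSn)
        rw [hS]
        exact Nat.mul_le_mul_right _ (by omega)
  have hWle : 45 * W ≤ 2 * K * 2 ^ (3 * a + 4) := by
    have h1 : W ≤ (20 * L * h + L) * n := by
      calc W ≤ (S + L) * n + S * (3 * n) := by
            rw [hW]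
            exact add_le_add (Nat.mul_le_mul_right _ (by omega))
              (Nat.mul_le_mul (by omega) hm)
        _ = _ := by rw [hS]; ring
    have h2 : 45 * (20 * L * h + L) ≤ 4 * K := by
      rw [hK]
      have : 45 * (20 * h + 1) ≤ 100 * h ^ 2 := by
        have h3 : 11 * h ≤ h * h := Nat.mul_le_mul_right _ hh
        rw [sq]
        omega
      calc _ = L * (45 * (20 * h + 1)) := by ring
        _ ≤ L * (100 * h ^ 2) := Nat.mul_le_mul_left _ this
        _ = _ := by ring
    have h3 : 2 * n ≤ 2 ^ (3 * a + 4) := by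
      rw [show 3 * a + 4 = (3 * a + 3) + 1 by ring, pow_succ]
      omega
    calc 45 * W ≤ 45 * ((20 * L * h + L) * n) := Nat.mul_le_mul_left _ h1
      _ = 45 * (20 * L * h + L) * n := by ring
      _ ≤ 4 * K * n := Nat.mul_le_mul_right _ h2
      _ = 2 * K * (2 * n) := by ring
      _ ≤ _ := Nat.mul_le_mul_left _ h3
  have hn0 : (0 : ℝ) < n := by exact_mod_cast hnpos
  have hU0 : (0 : ℝ) < U := by exact_mod_cast (by omega : 0 < U)
  have hV0 : (0 : ℝ) < V := by exact_mod_cast hVpos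
  set x := Real.log U with hx
  set y := Real.log V with hy
  have hx0 : 0 ≤ x := Real.log_natCast_nonneg U
  have hxy : x ≤ y := Real.log_le_log hU0 (by exact_mod_cast hUV)
  have hyh : y ≤ h * Real.log 2 := by
    rw [← Real.log_pow]
    exact Real.log_le_log hV0 (by exact_mod_cast hV)
  set ν := n * y - m * x with hν
  have hexpν : Real.exp ν * (U : ℝ) ^ m = (V : ℝ) ^ n := by
    rw [hν, Real.exp_sub, Real.exp_nat_mul, Real.exp_nat_mul, hx, hy, Real.exp_log hU0,
      Real.exp_log hV0]
    field_simp
  have heqR : (U : ℝ) ^ m + D = (V : ℝ) ^ n := by exact_mod_cast heq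
  have hUm : (0 : ℝ) < (U : ℝ) ^ m := by positivity
  have hν0 : 0 ≤ ν := by
    have h1 : 1 ≤ Real.exp ν := by
      refine le_of_mul_le_mul_right ?_ hUm
      rw [hexpν, ← heqR, one_mul]
      have : (0 : ℝ) ≤ D := D.cast_nonneg
      linarith
    exact Real.one_le_exp_iff.1 h1
  have hν1 : (Real.exp ν - 1) * 8 ^ N ≤ 1 := by
    refine le_of_mul_le_mul_right ?_ hUm
    calc (Real.exp ν - 1) * 8 ^ N * (U : ℝ) ^ m
        = (Real.exp ν * (U : ℝ) ^ m - (U : ℝ) ^ m) * 8 ^ N := by ring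
      _ = D * 8 ^ N := by rw [hexpν, ← heqR]; ring
      _ ≤ 1 * (U : ℝ) ^ m := by rw [one_mul]; exact_mod_cast hbig
  -- `r * x + s * y` equals `w * x / n` up to the small error `s * ν / n`
  set ω := x / n * W with hω
  have hω0 : 0 ≤ ω := by positivity
  have hωle : ω ≤ ω₂ * Real.log 2 := by
    have h1 : ω = (R - 1 : ℕ) * x + (S - 1 : ℕ) * (m * x / n) := by
      rw [hω, hW]
      push_cast
      field_simp
    have h2 : m * x / n ≤ y := by
      rw [div_le_iff₀ hn0]
      linarith
    rw [h1, ← hω₂']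
    have h3 : ((R - 1 : ℕ) : ℝ) ≤ S + L := by
      exact_mod_cast (by omega : R - 1 ≤ S + L)
    have h4 : ((S - 1 : ℕ) : ℝ) ≤ S := by exact_mod_cast (by omega : S - 1 ≤ S)
    have hl2 : 0 ≤ (h : ℝ) * Real.log 2 := by positivity
    calc _ ≤ ((S : ℝ) + L) * (h * Real.log 2) + S * (h * Real.log 2) :=
          add_le_add (mul_le_mul h3 (hxy.trans hyh) hx0 (by positivity))
            (mul_le_mul h4 (h2.trans hyh) (by positivity) (by positivity))
      _ = _ := by push_cast; ring
  -- dividing row `i` by `E i ^ a` centres the exponents `l` at `0`; the factor `1 + η i j` accounts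
  -- for replacing `log (E i)` by its approximation `ω * w i / W`
  let w : Fin L × Fin K → ℕ := fun i => (g i).1 * n + (g i).2 * m
  let E : Fin L × Fin K → ℕ := fun i => U ^ ((g i).1 : ℕ) * V ^ ((g i).2 : ℕ)
  have hE0 : ∀ i, (0 : ℝ) < E i := fun i => by
    have : 0 < E i := by simp only [E]; positivity
    exact_mod_cast this
  let η : Fin L × Fin K → Fin L × Fin K → ℝ := fun i j =>
    Real.exp (((j.1 : ℕ) - (a : ℝ)) * ((g i).2 : ℕ) * ν / n) - 1
  have hη : ∀ i j, |η i j| * 8 ^ (L * K) ≤ 1 := by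
    intro i j
    rw [← hN]
    refine le_trans (mul_le_mul_of_nonneg_right ?_ (by positivity)) hν1
    have h1 : |((j.1 : ℕ) - (a : ℝ)) * ((g i).2 : ℕ) * ν / n| ≤ ν := by
      rw [abs_div, abs_mul, abs_mul, abs_of_pos hn0, abs_of_nonneg hν0, Nat.abs_cast,
        div_le_iff₀ hn0, mul_comm ν]
      refine mul_le_mul_of_nonneg_right ?_ hν0
      have h2 : |((j.1 : ℕ) - (a : ℝ))| ≤ a := by
        have : ((j.1 : ℕ) : ℝ) ≤ 2 * a := by
          have := j.1.2
          exact_mod_cast (by omega : (j.1 : ℕ) ≤ 2 * a)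
        have : (0 : ℝ) ≤ (j.1 : ℕ) := Nat.cast_nonneg _
        rw [abs_le]
        constructor <;> linarith
      have h3 : (((g i).2 : ℕ) : ℝ) ≤ S := by exact_mod_cast (g i).2.2.le
      calc _ ≤ (a : ℝ) * S := mul_le_mul h2 h3 (by positivity) (by positivity)
        _ ≤ n := by exact_mod_cast haS
    have h4 := abs_le.1 h1
    simp only [η]
    generalize ((j.1 : ℕ) - (a : ℝ)) * ((g i).2 : ℕ) * ν / n = t at h4
    have h5 : Real.exp t ≤ Real.exp ν := Real.exp_le_exp.2 h4.2
    have h6 : Real.exp (-ν) ≤ Real.exp t := Real.exp_le_exp.2 h4.1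
    have h7 : 1 ≤ Real.exp ν := Real.one_le_exp hν0
    have h8 : 2 ≤ Real.exp ν + Real.exp (-ν) := by
      linarith [Real.add_one_le_exp ν, Real.add_one_le_exp (-ν)]
    rw [abs_le]
    constructor <;> linarith
  have hwW : ∀ i, (w i : ℝ) ≤ W := by
    intro i
    have h1 := (g i).1.2
    have h2 := (g i).2.2
    have : w i ≤ W := by
      rw [hW]
      exact add_le_add (Nat.mul_le_mul_right _ (by omega)) (Nat.mul_le_mul_right _ (by omega))
    exact_mod_cast this
  have hupper := abs_interpolation_det_le (a := a) W ω hW0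
    (by exact_mod_cast hKW.trans (Nat.le_succ W)) hω0 w hwW η hη
  set A : Matrix (Fin L × Fin K) (Fin L × Fin K) ℝ := Matrix.of fun i j =>
    ((w i).choose j.2 : ℝ) * Real.exp (((j.1 : ℕ) - (a : ℝ)) * ω * (w i / W)) * (1 + η i j)
    with hA
  -- `A` is the integer matrix with its rows divided by `E i ^ a`
  have hrow : ∀ i j, (((w i).choose j.2 : ℕ) : ℝ) * (E i : ℝ) ^ (j.1 : ℕ) =
      (E i : ℝ) ^ a * A i j := by
    intro i j
    have hlogE : Real.log (E i) = ω * (w i / W) + ((g i).2 : ℕ) * ν / n := by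
      simp only [E, w]
      push_cast
      rw [Real.log_mul (by positivity) (by positivity), Real.log_pow, Real.log_pow, ← hx, ← hy]
      rw [hω, hν]
      field_simp
      ring
    have h1 : ∀ k : ℕ, (E i : ℝ) ^ k = Real.exp (k * Real.log (E i)) := by
      intro k
      rw [Real.exp_nat_mul, Real.exp_log (hE0 i)]
    simp only [hA, Matrix.of_apply, η]
    rw [add_sub_cancel, h1, h1 a, mul_assoc ((w i).choose j.2 : ℝ), ← Real.exp_add,
      mul_left_comm, ← Real.exp_add, hlogE]
    congr 2
    ring
  have hdet : (∏ i, (E i : ℝ) ^ a) * A.det ≠ 0 := by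
    rw [← Matrix.det_mul_column]
    convert hg using 2
    ext i j
    exact (hrow i j).symm
  have hone : 1 ≤ |(∏ i, (E i : ℝ) ^ a) * A.det| := by
    have hint : (∏ i, (E i : ℝ) ^ a) * A.det = (((Matrix.of fun i j : Fin L × Fin K =>
        (((w i).choose j.2 : ℕ) : ℤ) * (E i : ℤ) ^ (j.1 : ℕ)).det : ℤ) : ℝ) := by
      rw [← Matrix.det_mul_column, Int.cast_det]
      congr 1
      ext i j
      simp only [Matrix.of_apply, Matrix.map_apply]
      rw [← hrow]
      push_cast
      rfl
    rw [hint] at hdet ⊢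
    exact_mod_cast Int.one_le_abs (by exact_mod_cast hdet)
  have hEle : ∏ i, (E i : ℝ) ^ a ≤ 2 ^ (ω₂ * a * N) := by
    have h1 : ∀ i, (E i : ℝ) ^ a ≤ 2 ^ (ω₂ * a) := by
      intro i
      have h2 : E i ≤ 2 ^ ω₂ := by
        have h3 := (g i).1.2
        have h4 := (g i).2.2
        calc E i ≤ (2 ^ h) ^ ((g i).1 : ℕ) * (2 ^ h) ^ ((g i).2 : ℕ) :=
              Nat.mul_le_mul (Nat.pow_le_pow_left (hUV.trans hV) _) (Nat.pow_le_pow_left hV _)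
          _ = 2 ^ (h * ((g i).1 + (g i).2)) := by rw [← pow_add, ← pow_mul]
          _ ≤ 2 ^ ω₂ := by
            refine Nat.pow_le_pow_right (by norm_num) ?_
            rw [← hω₂', mul_comm h]
            exact Nat.mul_le_mul_right _ (by omega)
      rw [pow_mul]
      have : (E i : ℝ) ≤ 2 ^ ω₂ := by exact_mod_cast h2
      gcongr
    calc _ ≤ ∏ _i : Fin L × Fin K, (2 : ℝ) ^ (ω₂ * a) :=
          Finset.prod_le_prod (fun i _ => by positivity) fun i _ => h1 i
      _ = _ := by
        rw [Finset.prod_const, Finset.card_univ, Fintype.card_prod, Fintype.card_fin,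
          Fintype.card_fin, ← hN, ← pow_mul]
  have hfac : (N.factorial : ℝ) ≤ 2 ^ (2 * S * N) := by
    have h1 : N.factorial ≤ 2 ^ (2 * S * N) := by
      calc N.factorial ≤ N ^ N := Nat.factorial_le_pow N
        _ ≤ (2 ^ (2 * S)) ^ N := by
          refine Nat.pow_le_pow_left ?_ _
          rw [hNS, two_mul, pow_add]
          exact Nat.mul_le_mul S.lt_two_pow_self.le S.lt_two_pow_self.le
        _ = _ := by rw [← pow_mul]
    exact_mod_cast h1
  subst hL
  have hcol := prod_column_le (a := a) hKpos W ω hW0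
  have hexp : Real.exp (4 * (a * (a + 1)) * ω) ^ K ≤ 2 ^ (ω₂ * (4 * (a * (a + 1))) * K) := by
    rw [pow_mul]
    refine pow_le_pow_left₀ (Real.exp_pos _).le ?_ _
    calc _ ≤ Real.exp ((ω₂ * (4 * (a * (a + 1))) : ℕ) * Real.log 2) := by
          refine Real.exp_le_exp.2 ?_
          push_cast
          calc _ ≤ 4 * ((a : ℝ) * (a + 1)) * (ω₂ * Real.log 2) := by gcongr
            _ = _ := by ring
      _ = _ := by rw [Real.exp_nat_mul, Real.exp_log (by norm_num)]
  have hQ : ((45 / 2 * (W : ℝ) / K) ^ (K * (K - 1) / 2)) ^ (2 * a + 1) ≤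
      2 ^ ((3 * a + 4) * (K * (K - 1) / 2) * (2 * a + 1)) := by
    rw [pow_mul, pow_mul]
    have : 45 / 2 * (W : ℝ) / K ≤ 2 ^ (3 * a + 4) := by
      rw [div_le_iff₀ (by exact_mod_cast hKpos)]
      have : (45 * W : ℝ) ≤ 2 * K * 2 ^ (3 * a + 4) := by exact_mod_cast hWle
      linarith
    gcongr
  rw [← hN] at hupper hcol
  have hfinal : (8 : ℝ) ^ (N * (N - 1) / 2) ≤ 2 ^ (ω₂ * a * N + 2 * S * N + N +
      ω₂ * (4 * (a * (a + 1))) * K + (3 * a + 4) * (K * (K - 1) / 2) * (2 * a + 1)) := by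
    have hP0 : (0 : ℝ) ≤ ∏ i, (E i : ℝ) ^ a := Finset.prod_nonneg fun i _ => by positivity
    calc (8 : ℝ) ^ (N * (N - 1) / 2)
        ≤ |(∏ i, (E i : ℝ) ^ a) * A.det| * 8 ^ (N * (N - 1) / 2) :=
          le_mul_of_one_le_left (by positivity) hone
      _ = (∏ i, (E i : ℝ) ^ a) * (|A.det| * 8 ^ (N * (N - 1) / 2)) := by
          rw [abs_mul, abs_of_nonneg hP0, mul_assoc]
      _ ≤ 2 ^ (ω₂ * a * N) * (2 ^ (2 * S * N) * (2 ^ N * 2 ^ (ω₂ * (4 * (a * (a + 1))) * K) *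
          2 ^ ((3 * a + 4) * (K * (K - 1) / 2) * (2 * a + 1)))) := by
          refine mul_le_mul hEle (hupper.trans (mul_le_mul hfac (hcol.trans ?_)
            (Finset.prod_nonneg fun j _ => by positivity) (by positivity)))
            (by positivity) (by positivity)
          gcongr
      _ = _ := by
          rw [← pow_add, ← pow_add, ← pow_add, ← pow_add]
          congr 1
          ring
  have h8 : (8 : ℝ) = 2 ^ 3 := by norm_num
  rw [h8, ← pow_mul] at hfinal
  have := (pow_le_pow_iff_right₀ (by norm_num : (1 : ℝ) < 2)).1 hfinal
  omega

/-! ### The two exceptional equations for large `f` -/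

lemma one_sub_pow_two (X : ℤ) (n : ℕ) : ∃ c, (1 - X) ^ n = 1 - n * X + X ^ 2 * c := by
  induction n with
  | zero => exact ⟨0, by simp⟩
  | succ n ih =>
    obtain ⟨c, hc⟩ := ih
    refine ⟨n + c * (1 - X), ?_⟩
    rw [pow_succ, hc]
    push_cast
    ring

lemma one_sub_pow_four (X : ℤ) (n : ℕ) : ∃ c, 6 * (1 - X) ^ n =
    6 - 6 * n * X + 3 * n * (n - 1) * X ^ 2 - n * (n - 1) * (n - 2) * X ^ 3 + X ^ 4 * c := by
  induction n with
  | zero => exact ⟨0, by simp⟩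
  | succ n ih =>
    obtain ⟨c, hc⟩ := ih
    refine ⟨n * (n - 1) * (n - 2) + c * (1 - X), ?_⟩
    rw [pow_succ, ← mul_assoc, hc]
    push_cast
    ring

lemma sub_one_pow_odd (X : ℤ) {n : ℕ} (hn : Odd n) : (X - 1) ^ n = -(1 - X) ^ n := by
  rw [← neg_sub, hn.neg_pow]

/-- The exponents of `V ^ n - U ^ m = D` are coprime when `n` is odd and `D < V ^ 2`. -/
lemma coprime_exponents {U V m n D : ℕ} (hn : Odd n) (hD : 0 < D) (hDV : D < V ^ 2)
    (heq : U ^ m + D = V ^ n) : m.Coprime n := by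
  by_contra hne
  obtain ⟨d, hd⟩ : ∃ d, d = m.gcd n := ⟨_, rfl⟩
  have hn0 : 0 < n := hn.pos
  have hd1 : d ≠ 1 := fun h => hne (by rw [Nat.Coprime, ← hd, h])
  obtain ⟨i, hi⟩ : d ∣ m := hd ▸ Nat.gcd_dvd_left _ _
  obtain ⟨j, hj⟩ : d ∣ n := hd ▸ Nat.gcd_dvd_right _ _
  clear hd hne
  have hdodd : Odd d := Odd.of_dvd_nat hn ⟨j, hj⟩
  have hd3 : 3 ≤ d := by
    obtain ⟨k, hk⟩ := hdodd
    omega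
  have hj0 : 0 < j := by
    rcases Nat.eq_zero_or_pos j with rfl | h
    · omega
    · exact h
  rw [hi, hj, mul_comm d i, mul_comm d j, pow_mul, pow_mul] at heq
  have hVj : V ≤ V ^ j := Nat.le_self_pow hj0.ne' V
  obtain ⟨e, rfl⟩ := Nat.exists_eq_add_of_le hd3
  clear hi hj
  generalize V ^ j = A at *
  generalize U ^ i = T at *
  have hTA : T < A := by
    refine lt_of_pow_lt_pow_left₀ (3 + e) (Nat.zero_le _) ?_
    omega
  have h1 : T ^ (3 + e) ≤ A ^ (2 + e) * T := by
    rw [show 3 + e = (2 + e) + 1 by ring, pow_succ]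
    exact Nat.mul_le_mul_right _ (Nat.pow_le_pow_left hTA.le _)
  have h2 : A ^ (3 + e) = A ^ (2 + e) * A := by
    rw [show 3 + e = (2 + e) + 1 by ring, pow_succ]
  have h3 : A ^ (2 + e) * (T + 1) ≤ A ^ (2 + e) * A := Nat.mul_le_mul_left _ hTA
  have h4 : V ^ 2 ≤ A ^ (2 + e) :=
    (Nat.pow_le_pow_left hVj 2).trans (Nat.pow_le_pow_right (by omega) (by omega))
  rw [mul_add, mul_one] at h3
  omega

/-- Locates `z` between consecutive powers of `8`; `2 * a + 1` will be the number of exponentials in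
`no_close_powers`. -/
lemma exists_cube_scale {z : ℕ} (hz : 2 ^ 18 ≤ z) :
    ∃ a, 6 ≤ a ∧ 2 ^ (3 * a) ≤ z ∧ z < 2 ^ (3 * a + 3) := by
  have h1 : 2 ^ Nat.log 2 z ≤ z := Nat.pow_log_le_self 2 (by omega)
  have h2 : z < 2 ^ (Nat.log 2 z + 1) := Nat.lt_pow_succ_log_self (by norm_num) z
  have h3 : 18 ≤ Nat.log 2 z := (Nat.le_log_iff_pow_le (by norm_num) (by omega)).2 hz
  refine ⟨Nat.log 2 z / 3, by omega, le_trans (Nat.pow_le_pow_right (by norm_num) (by omega)) h1,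
    lt_of_lt_of_le h2 (Nat.pow_le_pow_right (by norm_num) (by omega))⟩

lemma scale_bound_one {a : ℕ} (ha : 6 ≤ a) :
    75 * (2 * a + 1) ^ 2 * (a + 10) + 2 ≤ 2 ^ (3 * a) := by
  induction a, ha using Nat.le_induction with
  | base => norm_num
  | succ a ha ih =>
    have e : 2 ^ (3 * (a + 1)) = 2 ^ (3 * a) * 8 := by
      rw [show 3 * (a + 1) = 3 * a + 3 by ring, pow_add]
      norm_num
    rw [e]
    have : 75 * (2 * (a + 1) + 1) ^ 2 * (a + 1 + 10) + 2 ≤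
        8 * (75 * (2 * a + 1) ^ 2 * (a + 10) + 2) := by
      obtain ⟨b, rfl⟩ := Nat.exists_eq_add_of_le ha
      ring_nf
      omega
    omega

lemma scale_bound_two {a : ℕ} (ha : 7 ≤ a) :
    75 * (2 * a + 1) ^ 2 * (3 * a + 8) + 1 ≤ 2 ^ (3 * a) := by
  induction a, ha using Nat.le_induction with
  | base => norm_num
  | succ a ha ih =>
    have e : 2 ^ (3 * (a + 1)) = 2 ^ (3 * a) * 8 := by
      rw [show 3 * (a + 1) = 3 * a + 3 by ring, pow_add]
      norm_num
    rw [e]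
    have : 75 * (2 * (a + 1) + 1) ^ 2 * (3 * (a + 1) + 8) + 1 ≤
        8 * (75 * (2 * a + 1) ^ 2 * (3 * a + 8) + 1) := by
      obtain ⟨b, rfl⟩ := Nat.exists_eq_add_of_le ha
      ring_nf
      omega
    omega

/-- `F + (3 F - 1) ^ y = (4 F - 1) ^ z` with `z > 1` is impossible for large `F`: reduction modulo
`F ^ 2` gives `F ∣ 4 z - 3 y - 1`, which is positive, so that `z > F`; but then `B ^ y` and `C ^ z`
are too close to each other. -/
lemma no_solution_exponent_two_large {F B C y z : ℕ} (hF : 2 ^ 20 ≤ F) (hB : B + 1 = 3 * F)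
    (hC : C + 1 = 4 * F) (hy : Odd y) (hz : Odd z) (hz1 : 1 < z) (heq : B ^ y + F = C ^ z) :
    False := by
  have hF0 : 0 < F := by omega
  have hyz : z ≤ y := by
    by_contra h
    obtain ⟨k, rfl⟩ : ∃ k, z = k + 1 := ⟨z - 1, by omega⟩
    have h1 : B ^ y ≤ C ^ k :=
      (Nat.pow_le_pow_left (by omega) y).trans (Nat.pow_le_pow_right (by omega) (by omega))
    have h2 : 0 < C ^ k := Nat.pow_pos (by omega)
    rw [pow_succ] at heq
    have h3 : C ^ k * (F + 1) ≤ C ^ k * C := Nat.mul_le_mul_left _ (by omega)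
    have h4 : F ≤ C ^ k * F := Nat.le_mul_of_pos_left _ h2
    have h5 : 1 * F < C ^ k * F := by
      have : 1 < C ^ k := Nat.one_lt_pow (by omega) (by omega)
      exact Nat.mul_lt_mul_of_pos_right this hF0
    rw [mul_add] at h3
    omega
  -- `B ^ 4 ≥ F * C ^ 3` bounds the ratio of the exponents
  have hyz2 : 3 * y + 1 < 4 * z := by
    by_contra! h
    have h1 : F * C ^ 3 ≤ B ^ 4 := by
      have h2 : 47 * F ≤ 16 * B := by omega
      have h3 := Nat.pow_le_pow_left h2 4
      have h4 := Nat.pow_le_pow_left (show C ≤ 4 * F by omega) 3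
      have h5 : F * C ^ 3 ≤ 64 * F ^ 4 := by
        calc F * C ^ 3 ≤ F * (4 * F) ^ 3 := Nat.mul_le_mul_left _ h4
          _ = _ := by ring
      rw [mul_pow, mul_pow] at h3
      norm_num at h3
      omega
    have h6 : B ^ (4 * z) ≤ B ^ (3 * y + 1) := Nat.pow_le_pow_right (by omega) h
    have h7 : B ^ (3 * y + 1) < C ^ (3 * z) * B := by
      rw [pow_succ, mul_comm 3 y, mul_comm 3 z, pow_mul, pow_mul]
      refine Nat.mul_lt_mul_of_pos_right (Nat.pow_lt_pow_left (by omega) (by norm_num)) (by omega)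
    have h8 : (F * C ^ 3) ^ z ≤ B ^ (4 * z) := by
      rw [pow_mul]
      exact Nat.pow_le_pow_left h1 z
    rw [mul_pow, ← pow_mul] at h8
    have h9 : B ≤ F ^ z := by
      calc B ≤ F ^ 2 := by nlinarith
        _ ≤ F ^ z := Nat.pow_le_pow_right hF0 hz1
    have h10 : C ^ (3 * z) * B ≤ F ^ z * C ^ (3 * z) := by
      rw [mul_comm]
      exact Nat.mul_le_mul_right _ h9
    omega
  have hcong : (F : ℤ) ∣ 4 * z - 3 * y - 1 := by
    have h1 : ((3 * F - 1 : ℤ)) ^ y + F = (4 * F - 1 : ℤ) ^ z := by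
      have hB' : (3 * F - 1 : ℤ) = B := by zify at hB; linarith
      have hC' : (4 * F - 1 : ℤ) = C := by zify at hC; linarith
      rw [hB', hC']
      exact_mod_cast heq
    rw [sub_one_pow_odd _ hy, sub_one_pow_odd _ hz] at h1
    obtain ⟨c, hc⟩ := one_sub_pow_two (3 * F) y
    obtain ⟨d, hd⟩ := one_sub_pow_two (4 * F) z
    rw [hc, hd] at h1
    refine ⟨16 * d - 9 * c, ?_⟩
    have hF' : (F : ℤ) ≠ 0 := by exact_mod_cast hF0.ne'
    apply mul_left_cancel₀ hF'
    linear_combination (-1) * h1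
  have hzF : F < z := by
    have := Int.le_of_dvd (by omega) hcong
    omega
  obtain ⟨a, ha, ha1, ha2⟩ := exists_cube_scale (z := z) (by omega)
  obtain ⟨g, hg⟩ : ∃ g, g = Nat.log 2 F := ⟨_, rfl⟩
  have hg1 : 2 ^ g ≤ F := by rw [hg]; exact Nat.pow_log_le_self 2 (by omega)
  have hg2 : F < 2 ^ (g + 1) := by rw [hg]; exact Nat.lt_pow_succ_log_self (by norm_num) F
  have hg3 : 20 ≤ g := by rw [hg]; exact (Nat.le_log_iff_pow_le (by norm_num) (by omega)).2 hF
  have hga : g < 3 * a + 3 := by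
    refine (Nat.pow_lt_pow_iff_right (a := 2) (by norm_num)).1 ?_
    omega
  have hnum : 3 * (25 * (2 * a + 1) ^ 2 * (g + 3) ^ 2) + (g + 1) ≤ (g + 1) * z := by
    rcases ha.eq_or_lt with rfl | ha7
    · have : g = 20 := by omega
      subst this
      norm_num at hF ⊢
      omega
    · have h1 := scale_bound_two ha7
      have h2 : (g + 3) ^ 2 ≤ (g + 1) * (3 * a + 8) := by
        calc (g + 3) ^ 2 ≤ (g + 1) * (g + 6) := by nlinarith
          _ ≤ _ := Nat.mul_le_mul_left _ (by omega)
      calc _ ≤ 3 * (25 * (2 * a + 1) ^ 2 * ((g + 1) * (3 * a + 8))) + (g + 1) := by gcongr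
        _ = (g + 1) * (75 * (2 * a + 1) ^ 2 * (3 * a + 8) + 1) := by ring
        _ ≤ (g + 1) * z := Nat.mul_le_mul_left _ (h1.trans ha1)
  refine no_close_powers (h := g + 3) ha (by omega) (by omega) (show B ≤ C by omega) ?_ hF0 heq
    (coprime_exponents hz hF0 ?_ heq) (by omega) ha2 ?_
  · rw [show g + 3 = (g + 1) + 2 by ring, pow_add]
    omega
  · nlinarith
  · calc F * 8 ^ (25 * (2 * a + 1) ^ 2 * (g + 3) ^ 2)
        ≤ 2 ^ (g + 1) * 2 ^ (3 * (25 * (2 * a + 1) ^ 2 * (g + 3) ^ 2)) := by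
          rw [pow_mul 2 3]
          exact Nat.mul_le_mul hg2.le le_rfl
      _ ≤ 2 ^ ((g + 1) * z) := by
          rw [← pow_add]
          exact Nat.pow_le_pow_right (by norm_num) (by omega)
      _ = (2 ^ (g + 1)) ^ z := pow_mul _ _ _
      _ ≤ B ^ z := Nat.pow_le_pow_left (by rw [pow_succ]; omega) z
      _ ≤ B ^ y := Nat.pow_le_pow_right (by omega) hyz

lemma pow_two_mul_le {f B C x z : ℕ} (hf : 1 < f) (hBC : f ^ 2 + B = C) (hz : 0 < z)
    (heq : f ^ x + B = C ^ z) : 2 * z ≤ x := by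
  refine (Nat.pow_le_pow_iff_right hf).1 ?_
  have h1 : (f ^ 2) ^ z + B ^ z ≤ (f ^ 2 + B) ^ z :=
    pow_add_pow_le (Nat.zero_le _) (Nat.zero_le _) hz.ne'
  have h2 : B ≤ B ^ z := Nat.le_self_pow hz.ne' B
  rw [hBC] at h1
  rw [pow_mul]
  omega

/-- Reduction of `f ^ x + B = C ^ z` modulo `f ^ (w + 2)`. -/
lemma four_mul_exponent_dvd {f x z F B C : ℕ} {w : ℕ} (hf : 1 < f) (hF : F = f ^ 2)
    (hB : B + 1 = 3 * F) (hC : C + 1 = 4 * F) (hz : Odd z) (heq : f ^ x + B = C ^ z)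
    (hw : w ≤ 2) (hx : w + 2 ≤ x) : ((f ^ w : ℕ) : ℤ) ∣ 4 * z - 3 := by
  have h1 : (f : ℤ) ^ x + (3 * F - 1 : ℤ) = (4 * F - 1 : ℤ) ^ z := by
    have hB' : (3 * F - 1 : ℤ) = B := by zify at hB; linarith
    have hC' : (4 * F - 1 : ℤ) = C := by zify at hC; linarith
    rw [hB', hC']
    exact_mod_cast heq
  rw [sub_one_pow_odd _ hz] at h1
  obtain ⟨d, hd⟩ := one_sub_pow_two (4 * F) z
  rw [hd] at h1
  obtain ⟨k, rfl⟩ := Nat.exists_eq_add_of_le hx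
  obtain ⟨v, hv⟩ := Nat.exists_eq_add_of_le hw
  have hF' : (F : ℤ) ≠ 0 := by
    rw [hF]
    positivity
  refine ⟨f ^ k + 16 * f ^ v * d, ?_⟩
  apply mul_left_cancel₀ hF'
  have e1 : (f : ℤ) ^ (w + 2 + k) = F * (f ^ w * f ^ k) := by
    rw [hF]
    push_cast
    ring
  have e2 : (f : ℤ) ^ w * f ^ v = F := by
    rw [hF, hv]
    push_cast
    ring
  rw [e1] at h1
  push_cast
  linear_combination (-1) * h1 + 16 * (F : ℤ) * d * (-e2)

/-- `f ^ x + (3 f ^ 2 - 1) = (4 f ^ 2 - 1) ^ z` with `z > 1` is impossible for `f ≥ 17`: expansion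
to order `F ^ 4` shows that `z` is at least `F ^ 3 / 32`, and then `f ^ x` and `C ^ z` are too close
to each other. -/
lemma no_solution_exponent_one_large {f F B C x z : ℕ} (hf : 17 ≤ f) (hF : F = f ^ 2)
    (hB : B + 1 = 3 * F) (hC : C + 1 = 4 * F) (hx : 3 ≤ x) (hz : Odd z) (hz1 : 1 < z)
    (heq : f ^ x + B = C ^ z) : False := by
  have hF289 : 289 ≤ F := by rw [hF]; nlinarith
  have hxz := pow_two_mul_le (by omega) (by omega : f ^ 2 + B = C) hz.pos heq
  have hz5 : 5 ≤ z := by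
    have h := four_mul_exponent_dvd (w := 1) (by omega) hF hB hC hz heq (by omega) hx
    have h2 := Int.le_of_dvd (by omega) h
    rw [pow_one] at h2
    omega
  obtain ⟨u, hu⟩ := four_mul_exponent_dvd (w := 2) (by omega) hF hB hC hz heq le_rfl (by omega)
  rw [← hF] at hu
  have hF0 : (0 : ℤ) < F := by omega
  have hu0 : 0 < u := by
    by_contra! h
    have : (F : ℤ) * u ≤ 0 := mul_nonpos_of_nonneg_of_nonpos hF0.le h
    omega
  -- inserting `4 z = 3 + F u` into the expansion to order `F ^ 4` gives a congruence for `u`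
  have hdiv : (F : ℤ) ^ 2 ∣ 6 * u + 9 + 24 * F := by
    have h1 : (f : ℤ) ^ x + (3 * F - 1 : ℤ) = (4 * F - 1 : ℤ) ^ z := by
      have hB' : (3 * F - 1 : ℤ) = B := by zify at hB; linarith
      have hC' : (4 * F - 1 : ℤ) = C := by zify at hC; linarith
      rw [hB', hC']
      exact_mod_cast heq
    rw [sub_one_pow_odd _ hz] at h1
    obtain ⟨c, hc⟩ := one_sub_pow_four (4 * F) z
    obtain ⟨k, rfl⟩ := Nat.exists_eq_add_of_le (show 8 ≤ x by omega)
    have e1 : (f : ℤ) ^ (8 + k) = F ^ 4 * f ^ k := by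
      rw [hF]
      push_cast
      ring
    rw [e1] at h1
    obtain ⟨K, hK⟩ : ∃ K : ℤ, 6 * u * (1 - F) + 9 + 15 * F = F ^ 2 * K := by
      refine ⟨6 * f ^ k + 3 * u ^ 2 - u * ((F * u) ^ 2 - 3 * (F * u) - 13) + 256 * c, ?_⟩
      apply mul_left_cancel₀ (pow_ne_zero 2 hF0.ne')
      have hz4 : (4 * z : ℤ) = 3 + F * u := by linarith
      have h2 : (6 : ℤ) * F ^ 4 * f ^ k + 18 * F = 6 * F * (4 * z) - 3 * F ^ 2 * (4 * z) * (4 * z - 4)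
          + F ^ 3 * (4 * z) * (4 * z - 4) * (4 * z - 8) - 256 * F ^ 4 * c := by
        linear_combination 6 * h1 - hc
      rw [hz4] at h2
      linear_combination -h2
    exact ⟨K * (1 + F) + 6 * u - 15, by linear_combination (1 + F) * hK⟩
  have hzF : (F : ℤ) ^ 3 ≤ 32 * z := by
    have h1 := Int.le_of_dvd (by positivity) hdiv
    nlinarith
  have hzF' : F ^ 3 ≤ 32 * z := by exact_mod_cast hzF
  have hz18 : 2 ^ 18 ≤ z := by
    have : 289 ^ 3 ≤ F ^ 3 := Nat.pow_le_pow_left hF289 3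
    omega
  obtain ⟨a, ha, ha1, ha2⟩ := exists_cube_scale hz18
  obtain ⟨g, hg⟩ : ∃ g, g = Nat.log 2 F := ⟨_, rfl⟩
  have hg1 : 2 ^ g ≤ F := by rw [hg]; exact Nat.pow_log_le_self 2 (by omega)
  have hg2 : F < 2 ^ (g + 1) := by rw [hg]; exact Nat.lt_pow_succ_log_self (by norm_num) F
  have hg3 : 8 ≤ g := by
    rw [hg]
    exact (Nat.le_log_iff_pow_le (by norm_num) (by omega)).2 (by omega)
  have hga : g ≤ a + 2 := by
    have h1 : 2 ^ (3 * g) < 2 ^ (3 * a + 8) := by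
      have h2 := Nat.pow_le_pow_left hg1 3
      rw [← pow_mul, mul_comm g 3] at h2
      have e : 2 ^ (3 * a + 8) = 2 ^ (3 * a + 3) * 32 := by rw [pow_add, pow_add]; ring
      omega
    have := (Nat.pow_lt_pow_iff_right (a := 2) (by norm_num)).1 h1
    omega
  have hnum : 3 * (25 * (2 * a + 1) ^ 2 * (g + 3) ^ 2) + (g + 3) ≤ g * z := by
    have h1 := scale_bound_one ha
    have h2 : (g + 3) ^ 2 ≤ g * (a + 10) := by
      calc (g + 3) ^ 2 ≤ g * (g + 8) := by nlinarith
        _ ≤ _ := Nat.mul_le_mul_left _ (by omega)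
    calc _ ≤ 3 * (25 * (2 * a + 1) ^ 2 * (g * (a + 10))) + g * 2 := by
          gcongr
          omega
      _ = g * (75 * (2 * a + 1) ^ 2 * (a + 10) + 2) := by ring
      _ ≤ g * z := Nat.mul_le_mul_left _ (h1.trans ha1)
  have hBC : B < C := by omega
  have hCh : C < 2 ^ (g + 3) := by
    rw [show g + 3 = (g + 1) + 2 by ring, pow_add]
    omega
  have hx3 : x ≤ 3 * z := by
    have h1 : f ^ x < f ^ (3 * z) := by
      calc f ^ x < C ^ z := by omega
        _ ≤ (f ^ 3) ^ z := by
          refine Nat.pow_le_pow_left ?_ z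
          calc C ≤ 4 * f ^ 2 := by omega
            _ ≤ f * f ^ 2 := Nat.mul_le_mul_right _ (by omega)
            _ = f ^ 3 := by ring
        _ = _ := (pow_mul _ _ _).symm
    exact ((Nat.pow_lt_pow_iff_right (by omega)).1 h1).le
  have hfC : f ≤ C := by nlinarith
  refine no_close_powers (h := g + 3) ha (by omega) (by omega) hfC hCh.le (by omega) heq
    (coprime_exponents hz (by omega) ?_ heq) hx3 ha2 ?_
  · nlinarith
  · calc B * 8 ^ (25 * (2 * a + 1) ^ 2 * (g + 3) ^ 2)
        ≤ 2 ^ (g + 3) * 2 ^ (3 * (25 * (2 * a + 1) ^ 2 * (g + 3) ^ 2)) := by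
          rw [pow_mul 2 3]
          exact Nat.mul_le_mul (by omega) le_rfl
      _ ≤ 2 ^ (g * z) := by
          rw [← pow_add]
          exact Nat.pow_le_pow_right (by norm_num) (by omega)
      _ = (2 ^ g) ^ z := pow_mul _ _ _
      _ ≤ (f ^ 2) ^ z := Nat.pow_le_pow_left (by omega) z
      _ = f ^ (2 * z) := (pow_mul _ _ _).symm
      _ ≤ f ^ x := Nat.pow_le_pow_right (by omega) hxz

/-! ### Local obstructions modulo certified moduli -/

/-- `b ^ e % m` by repeated squaring, correct once `e < 2 ^ k` for the fuel `k`; this form is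
evaluated efficiently by the kernel. -/
def powMod (b m : ℕ) : ℕ → ℕ → ℕ
  | 0, _ => 1 % m
  | k + 1, e => b ^ (e % 2) * powMod b m k (e / 2) ^ 2 % m

lemma powMod_eq (b m : ℕ) : ∀ k e : ℕ, e < 2 ^ k → powMod b m k e = b ^ e % m
  | 0, e, h => by
    obtain rfl : e = 0 := by simpa using h
    rfl
  | k + 1, e, h => by
    rw [powMod, powMod_eq b m k (e / 2) (by rw [pow_succ] at h; omega)]
    conv_rhs => rw [← Nat.mod_add_div e 2, pow_add, mul_comm 2, pow_mul]
    exact Nat.ModEq.mul_left _ ((Nat.mod_modEq _ _).pow 2)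

lemma exists_residue {z z₀ E n : ℕ} (hn : 0 < n) (hz : z % E = z₀) :
    ∃ j < n, z % (E * n) = z₀ + E * j := by
  refine ⟨z / E % n, Nat.mod_lt _ hn, ?_⟩
  rw [Nat.mod_mul, hz]

lemma pow_modEq_of_mod {b P E z r : ℕ} (h : b ^ E % P = 1) (hz : z % E = r) :
    b ^ z ≡ b ^ r [MOD P] := by
  have hP : P ≠ 1 := by rintro rfl; omega
  have h1 : b ^ E ≡ 1 [MOD P] := by
    rcases Nat.eq_zero_or_pos P with rfl | hP0
    · simpa using h
    · rw [Nat.ModEq, h, Nat.mod_eq_of_lt (by omega)]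
  conv_lhs => rw [← Nat.mod_add_div z E, hz, pow_add, pow_mul]
  simpa using (h1.pow (z / E)).mul_left (b ^ r)

/-- Checks that `B ^ y + F = C ^ z` has no solution with `y`, `z` odd and `z > 1`: divisibility of
the left-hand side by `m ^ 2`, where `m ∣ C`, forces `y ≡ y₀ [MOD 2 * m]`, and then
`(B ^ y + F) ^ c` and `C ^ c` differ modulo `P`, where the order of `C ^ 2` divides `c`. The residue
`y₀` is found by comparing the quotients `(B ^ N - 1) / m` and `(F ^ N - 1) / m`, for an even `N`
with `B ^ N ≡ F ^ N ≡ 1 [MOD m]`. The order of `B` modulo `P` divides `2 * m * n`, which leaves `n`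
residues of `y` to be examined; the bounds by `2 ^ 64` make the fuel of `powMod` sufficient. -/
def certTwo (F B C m N y₀ P n c : ℕ) : Bool :=
  C % m == 0 && N % 2 == 0 && decide (N < 2 ^ 64) && m % 2 == 1 && y₀ % 2 == 1 &&
  decide (y₀ < 2 * m) && decide (0 < n) &&
  decide (2 * m * n < 2 ^ 64) && decide (2 * c < 2 ^ 64) &&
  powMod B (m ^ 2) 64 N % m == 1 && powMod F (m ^ 2) 64 N % m == 1 &&
  Nat.gcd (powMod B (m ^ 2) 64 N / m) m == 1 &&
  powMod B (m ^ 2) 64 N / m * y₀ % m == powMod F (m ^ 2) 64 N / m % m &&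
  powMod B P 64 (2 * m * n) == 1 && powMod C P 64 (2 * c) == 1 &&
  (List.range n).all fun j =>
    powMod (powMod B P 64 (y₀ + 2 * m * j) + F) P 64 c != powMod C P 64 c

lemma one_add_mul_pow_modEq (m b y : ℕ) : (1 + m * b) ^ y ≡ 1 + m * (b * y) [MOD m ^ 2] := by
  induction y with
  | zero => simp [Nat.ModEq]
  | succ y ih =>
    rw [pow_succ]
    refine (ih.mul_right _).trans ?_
    have : (1 + m * (b * y)) * (1 + m * b) = 1 + m * (b * (y + 1)) + m ^ 2 * (b * b * y) := by ring
    rw [this, Nat.ModEq, Nat.add_mul_mod_self_left]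

/-- If `m ^ 2` divides `B ^ y + F`, then the quotients `b = (B ^ N - 1) / m` and `d = (F ^ N - 1) / m`,
taken modulo `m`, restrict `y` modulo `m`. -/
lemma fermat_quotient_modEq {F B m N y b d : ℕ} (hN : Even N) (hm : 0 < m)
    (hdiv : m ^ 2 ∣ B ^ y + F) (hb : B ^ N % m ^ 2 = 1 + m * b) (hd : F ^ N % m ^ 2 = 1 + m * d) :
    b * y ≡ d [MOD m] := by
  have h1 : (B ^ y) ^ N ≡ F ^ N [MOD m ^ 2] := by
    rw [← Int.natCast_modEq_iff]
    have h2 : ((B ^ y : ℕ) : ℤ) ≡ -F [ZMOD (m ^ 2 : ℕ)] := by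
      rw [Int.modEq_iff_dvd]
      have := Int.natCast_dvd_natCast.2 hdiv
      rw [← dvd_neg]
      push_cast at this ⊢
      rwa [neg_sub, sub_neg_eq_add]
    have h3 := h2.pow N
    rw [hN.neg_pow] at h3
    exact_mod_cast h3
  have h2 : (B ^ y) ^ N ≡ (1 + m * b) ^ y [MOD m ^ 2] := by
    rw [← pow_mul, mul_comm, pow_mul, ← hb]
    exact (Nat.mod_modEq _ _).symm.pow y
  have h3 : 1 + m * (b * y) ≡ 1 + m * d [MOD m ^ 2] := by
    refine (one_add_mul_pow_modEq m b y).symm.trans (h2.symm.trans (h1.trans ?_))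
    rw [← hd]
    exact (Nat.mod_modEq _ _).symm
  have h4 := Nat.ModEq.add_left_cancel' 1 h3
  rw [sq] at h4
  exact Nat.ModEq.mul_left_cancel' hm.ne' h4

lemma no_solution_of_certTwo {F B C m N y₀ P n c y z : ℕ} (hcert : certTwo F B C m N y₀ P n c = true)
    (hy : Odd y) (hz : Odd z) (hz1 : 1 < z) (heq : B ^ y + F = C ^ z) : False := by
  simp only [certTwo, Bool.and_eq_true, beq_iff_eq, decide_eq_true_eq, List.all_eq_true,
    List.mem_range, bne_iff_ne, and_assoc] at hcert
  obtain ⟨hCm, hN, hNl, hm, hy₀, hy₀m, hn, hl1, hl2, hb, hd, hg, hq, hB, hC, hall⟩ := hcert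
  have hm0 : 0 < m := by omega
  have hmn : 2 * m ≤ 2 * m * n := Nat.le_mul_of_pos_right _ hn
  rw [powMod_eq _ _ _ _ (by omega)] at hb hd hg hq hB hC
  rw [powMod_eq _ _ _ _ (by omega)] at hq
  have hy1 : y ≡ y₀ [MOD m] := by
    have h1 := fermat_quotient_modEq (F := F) (B := B) (m := m) (N := N) (y := y)
      (b := B ^ N % m ^ 2 / m) (d := F ^ N % m ^ 2 / m)
      (Nat.even_iff.2 hN) hm0 ?_ ?_ ?_
    · exact Nat.ModEq.cancel_left_of_coprime (by rwa [Nat.gcd_comm]) (h1.trans hq.symm)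
    · rw [heq]
      exact (pow_dvd_pow_of_dvd (Nat.dvd_of_mod_eq_zero hCm) 2).trans (pow_dvd_pow _ hz1)
    · conv_lhs => rw [← Nat.mod_add_div (B ^ N % m ^ 2) m, hb]
    · conv_lhs => rw [← Nat.mod_add_div (F ^ N % m ^ 2) m, hd]
  have hy2 : y % (2 * m) = y₀ := by
    have h2 : y ≡ y₀ [MOD 2] := by
      rw [Nat.ModEq, hy₀, Nat.odd_iff.1 hy]
    have h3 := (Nat.modEq_and_modEq_iff_modEq_mul (Nat.coprime_two_left.2 (Nat.odd_iff.2 hm))).1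
      ⟨h2, hy1⟩
    rw [h3, Nat.mod_eq_of_lt hy₀m]
  obtain ⟨j, hj, hyj⟩ := exists_residue hn hy2
  have hjn : 2 * m * j + 2 * m ≤ 2 * m * n := Nat.mul_le_mul_left (2 * m) hj
  refine hall j hj ?_
  rw [powMod_eq _ _ _ _ (by omega), powMod_eq _ _ _ _ (by omega),
    powMod_eq _ _ _ _ (by omega)]
  have h1 : B ^ (y₀ + 2 * m * j) % P + F ≡ C ^ z [MOD P] := by
    rw [← heq]
    exact ((Nat.mod_modEq _ _).trans (pow_modEq_of_mod hB hyj).symm).add_right F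
  refine (h1.pow c).trans ?_
  rw [← pow_mul]
  refine (pow_modEq_of_mod hC (r := z * c % (2 * c)) rfl).trans ?_
  obtain ⟨k, rfl⟩ := hz
  rw [show (2 * k + 1) * c = c + 2 * c * k by ring, Nat.add_mul_mod_self_left]
  exact (pow_modEq_of_mod hC rfl).symm

/-- Checks that `f ^ x + B = C ^ z` has no solution with `z` odd and `4 z ≡ 3` modulo `F`: these
force `z ≡ z₀ [MOD 2 * F]`, and then `(C ^ z - B) ^ c` is not `1` modulo `P`, where the order of
`f` divides `c`. The order of `C` modulo `P` divides `2 * F * n`, which leaves `n` residues of `z`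
to be examined. -/
def certOne (f F B C z₀ P n c : ℕ) : Bool :=
  F % 2 == 1 && z₀ % 2 == 1 && 4 * z₀ % F == 3 && decide (z₀ < 2 * F) &&
  decide (0 < n) && decide (0 < P) &&
  decide (2 * F * n < 2 ^ 64) && decide (c < 2 ^ 64) &&
  powMod C P 64 (2 * F * n) == 1 && powMod f P 64 c == 1 &&
  (List.range n).all fun j =>
    powMod (powMod C P 64 (z₀ + 2 * F * j) + B * (P - 1)) P 64 c != 1

lemma no_solution_of_certOne {f F B C z₀ P n c x z : ℕ}
    (hcert : certOne f F B C z₀ P n c = true) (hz : Odd z) (hzF : (F : ℤ) ∣ 4 * z - 3)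
    (heq : f ^ x + B = C ^ z) : False := by
  simp only [certOne, Bool.and_eq_true, beq_iff_eq, decide_eq_true_eq, List.all_eq_true,
    List.mem_range, bne_iff_ne, and_assoc] at hcert
  obtain ⟨hF, hz₀, hz₀F, hz₀l, hn, hP, hl1, hl2, hC, hf, hall⟩ := hcert
  have hFn : 2 * F ≤ 2 * F * n := Nat.le_mul_of_pos_right _ hn
  have hF3 : 3 < F := by
    have := Nat.mod_lt (4 * z₀) (show 0 < F by omega)
    omega
  rw [powMod_eq _ _ _ _ (by omega)] at hC hf
  have hz1 : z ≡ z₀ [MOD F] := by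
    have hcop : Nat.gcd F 4 = 1 := (Nat.coprime_two_right.2 (Nat.odd_iff.2 hF)).pow_right 2
    refine Nat.ModEq.cancel_left_of_coprime hcop ?_
    have h1 : 4 * z₀ ≡ 3 [MOD F] := by rw [Nat.ModEq, hz₀F, Nat.mod_eq_of_lt hF3]
    refine Nat.ModEq.trans ?_ h1.symm
    rw [Nat.ModEq.comm, Nat.modEq_iff_dvd]
    exact_mod_cast hzF
  have hz2 : z % (2 * F) = z₀ := by
    have h2 : z ≡ z₀ [MOD 2] := by
      rw [Nat.ModEq, hz₀, Nat.odd_iff.1 hz]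
    have h3 := (Nat.modEq_and_modEq_iff_modEq_mul (Nat.coprime_two_left.2 (Nat.odd_iff.2 hF))).1
      ⟨h2, hz1⟩
    rw [h3, Nat.mod_eq_of_lt hz₀l]
  obtain ⟨j, hj, hzj⟩ := exists_residue hn hz2
  have hjn : 2 * F * j + 2 * F ≤ 2 * F * n := Nat.mul_le_mul_left (2 * F) hj
  refine hall j hj ?_
  rw [powMod_eq _ _ _ _ (by omega), powMod_eq _ _ _ _ (by omega)]
  have h1 : C ^ (z₀ + 2 * F * j) % P + B * (P - 1) ≡ f ^ x [MOD P] := by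
    have h2 := ((Nat.mod_modEq _ _).trans (pow_modEq_of_mod hC hzj).symm).add_right (B * (P - 1))
    refine h2.trans ?_
    rw [← heq, add_assoc]
    obtain ⟨Q, rfl⟩ : ∃ Q, P = Q + 1 := ⟨P - 1, by omega⟩
    rw [show f ^ x + (B + B * (Q + 1 - 1)) = f ^ x + (Q + 1) * B by
      rw [Nat.add_sub_cancel]; ring, Nat.ModEq, Nat.add_mul_mod_self_left]
  have h2 := h1.pow c
  rw [← pow_mul] at h2
  rw [h2, pow_modEq_of_mod hf (Nat.mul_mod_left x c), pow_zero]
  refine Nat.mod_eq_of_lt ?_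
  by_contra hP1
  obtain rfl : P = 1 := by omega
  omega

/-! ### The two exceptional equations for small `f` -/

/-- Row `i` of the list holds the data `(m, y₀, n, P, c)` of a certificate for `f = 2 * (k + i)`,
where `m` is a prime and the even exponent `N` is `m - 1`. -/
def checkRows : ℕ → List (ℕ × ℕ × ℕ × ℕ × ℕ) → Bool
  | _, [] => true
  | k, (m, y₀, n, P, c) :: l =>
    certTwo (4 * k ^ 2) (12 * k ^ 2 - 1) (16 * k ^ 2 - 1) m (m - 1) y₀ P n c &&
      checkRows (k + 1) l

lemma no_solution_of_checkRows {y z : ℕ} (hy : Odd y) (hz : Odd z) (hz1 : 1 < z) :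
    ∀ {k : ℕ} {l : List (ℕ × ℕ × ℕ × ℕ × ℕ)}, checkRows k l = true →
      ∀ i, k ≤ i → i < k + l.length →
        (12 * i ^ 2 - 1) ^ y + 4 * i ^ 2 = (16 * i ^ 2 - 1) ^ z → False
  | k, [], _, i, h1, h2, _ => by
    simp at h2
    omega
  | k, (m, y₀, n, P, c) :: l, h, i, h1, h2, heq => by
    rw [checkRows, Bool.and_eq_true] at h
    rcases h1.eq_or_lt with rfl | h1
    · exact no_solution_of_certTwo h.1 hy hz hz1 heq
    · exact no_solution_of_checkRows hy hz hz1 h.2 i h1 (by simp at h2; omega) heq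

/-- Certificate data for `f = 2, 4, …, 120`. -/
def rowsLow : List (ℕ × ℕ × ℕ × ℕ × ℕ) :=
  [(3, 5, 1, 7, 1), (7, 11, 1, 43, 21), (11, 3, 1, 67, 11), (3, 3, 1, 7, 3), (3, 3, 1, 271, 135),
   (23, 21, 1, 139, 69), (29, 29, 1, 59, 29), (3, 5, 1, 7, 1), (5, 5, 1, 2371, 1185),
   (3, 5, 1, 97, 4), (43, 9, 1, 173, 86), (47, 63, 1, 283, 47), (3, 3, 1, 7, 1),
   (3, 3, 1, 2269, 1134), (59, 49, 1, 1063, 531), (5, 5, 1, 11, 5), (3, 5, 1, 13, 2),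
   (71, 139, 1, 2557, 213), (3, 5, 1, 193, 96), (79, 21, 1, 317, 79), (5, 9, 1, 181, 45),
   (3, 3, 1, 7, 1), (3, 3, 1, 499, 249), (5, 7, 1, 11, 5), (101, 69, 1, 607, 303),
   (3, 5, 1, 73, 36), (107, 87, 1, 857, 214), (3, 5, 1, 157, 39), (5, 9, 1, 11, 5),
   (17, 23, 1, 919, 17), (3, 3, 1, 7, 3), (3, 3, 1, 7, 3), (131, 151, 1, 263, 131),
   (5, 5, 1, 211, 21), (3, 5, 1, 13, 2), (11, 15, 1, 23, 11), (3, 5, 1, 19, 9),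
   (17, 29, 1, 103, 17), (31, 47, 1, 230827, 115413), (3, 3, 1, 67, 11), (3, 3, 1, 7, 1),
   (167, 77, 1, 594521, 29726), (19, 9, 1, 229, 19), (3, 5, 1, 223, 111), (179, 321, 1, 359, 179),
   (3, 5, 1, 193, 96), (11, 11, 1, 23, 11), (191, 123, 1, 746429, 186607), (3, 3, 1, 19, 9),
   (3, 3, 1, 7, 1), (5, 7, 1, 11, 5), (11, 9, 1, 397, 99), (3, 5, 1, 4861, 405), (5, 9, 1, 41, 4),
   (3, 5, 1, 7, 1), (223, 25, 1, 2677, 669), (229, 59, 1, 14657, 3664), (3, 3, 1, 19, 9),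
   (3, 3, 1, 7, 3), (239, 209, 1, 479, 239)]

/-- Certificate data for `f = 124, 126, …, 1022`. -/
def rowsHigh : List (ℕ × ℕ × ℕ × ℕ × ℕ) :=
  [(3, 5, 1, 7, 1), (23, 13, 1, 1013, 253), (3, 5, 1, 7, 1), (7, 13, 1, 43, 21), (5, 5, 1, 41, 10),
   (3, 3, 1, 7, 3), (3, 3, 1, 19, 9), (11, 9, 1, 727, 33), (31, 17, 1, 311, 155), (3, 5, 1, 7, 1),
   (7, 3, 1, 967, 483), (3, 5, 1, 19, 9), (5, 7, 1, 191, 95), (7, 3, 1, 29, 2), (3, 3, 1, 7, 1),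
   (3, 3, 1, 19, 9), (311, 529, 1, 17318347, 8659173), (5, 9, 1, 11, 5), (3, 5, 1, 109, 27),
   (17, 7, 1, 103, 51), (3, 5, 1, 13, 2), (37, 5, 1, 149, 37), (5, 5, 1, 281, 20), (3, 3, 1, 7, 1),
   (3, 3, 1, 1123, 33), (349, 533, 1, 18149, 4537), (353, 151, 1, 271811, 19415), (3, 5, 1, 31, 15),
   (359, 223, 1, 719, 359), (3, 5, 1, 163, 81), (41, 79, 1, 12301, 615), (7, 5, 1, 29, 7),
   (3, 3, 1, 7, 3), (3, 3, 1, 7, 3), (5, 9, 1, 151, 25), (43, 69, 1, 10321, 1720), (3, 5, 1, 19, 9),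
   (5, 7, 1, 41, 5), (3, 5, 1, 13, 2), (5, 7, 1, 11, 5), (11, 5, 1, 23, 11), (3, 3, 1, 19, 9),
   (3, 3, 1, 7, 1), (419, 565, 1, 839, 419), (17, 13, 1, 12377, 442), (3, 5, 1, 31, 5),
   (431, 723, 1, 266359, 44393), (3, 5, 1, 37, 3), (439, 245, 2, 228281, 2195),
   (89, 17, 1, 179, 89), (3, 3, 1, 37, 18), (3, 3, 1, 7, 1), (13, 19, 1, 53, 13),
   (461, 181, 1, 13831, 2305), (3, 5, 1, 43, 3), (467, 833, 3, 633253, 316626), (3, 5, 1, 7, 1),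
   (19, 7, 1, 2053, 1026), (13, 7, 1, 157, 78), (3, 3, 1, 13, 2), (3, 3, 1, 7, 3),
   (17, 25, 1, 103, 17), (5, 7, 1, 23251, 11625), (3, 5, 1, 7, 1), (5, 7, 1, 11, 5),
   (3, 5, 1, 7, 1), (19, 35, 1, 229, 57), (5, 9, 1, 101, 25), (3, 3, 1, 7, 3), (3, 3, 1, 37, 18),
   (17, 19, 1, 169933, 28322), (13, 3, 1, 131, 13), (3, 5, 1, 7, 1), (11, 21, 1, 34607, 17303),
   (3, 5, 1, 19, 9), (61, 105, 2, 4637, 1159), (7, 7, 1, 3137, 784), (3, 3, 1, 7, 1),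
   (3, 3, 1, 37, 18), (5, 5, 1, 1181, 118), (7, 5, 3, 1471, 245), (3, 5, 1, 181, 9),
   (23, 31, 1, 47, 23), (3, 5, 1, 409, 204), (5, 9, 1, 57751, 1375), (587, 995, 1, 8219, 587),
   (3, 3, 1, 7, 1), (3, 3, 1, 19, 9), (599, 1009, 1, 4793, 1198), (5, 7, 1, 41, 4),
   (3, 5, 1, 13, 2), (47, 49, 2, 4889, 2444), (3, 5, 1, 193, 96), (23, 29, 1, 4463, 2231),
   (89, 11, 1, 19759, 3293), (3, 3, 1, 7, 3), (3, 3, 1, 7, 3), (5, 5, 1, 11, 5),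
   (641, 403, 1, 12821, 6410), (3, 5, 1, 67, 11), (11, 13, 1, 89, 1), (3, 5, 1, 241, 40),
   (73, 85, 1, 293, 73), (659, 187, 1, 1319, 659), (3, 3, 1, 31, 15), (3, 3, 1, 7, 1),
   (11, 11, 1, 23, 1), (677, 1061, 2, 682417, 85302), (3, 5, 1, 19, 9), (5, 9, 1, 11, 5),
   (3, 5, 1, 19, 9), (7, 3, 1, 43, 21), (5, 7, 1, 11, 5), (3, 3, 1, 31, 15), (3, 3, 1, 7, 1),
   (101, 27, 1, 607, 303), (23, 35, 1, 47, 1), (3, 5, 1, 223, 111), (7, 13, 1, 29, 7),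
   (3, 5, 1, 7, 1), (727, 917, 2, 9849397, 820783), (17, 13, 1, 1973, 29), (3, 3, 1, 37, 18),
   (3, 3, 1, 7, 3), (149, 127, 1, 1789, 447), (83, 145, 1, 499, 83), (3, 5, 1, 7, 1),
   (151, 193, 1, 1511, 755), (3, 5, 1, 7, 1), (5, 5, 1, 8011, 445), (13, 11, 1, 79, 39),
   (3, 3, 1, 7, 3), (3, 3, 1, 61, 30), (11, 11, 1, 89, 22), (5, 9, 1, 11, 5), (3, 5, 1, 7, 1),
   (7, 11, 1, 43, 7), (3, 5, 1, 13, 2), (17, 33, 1, 137, 17), (5, 7, 1, 31, 15), (3, 3, 1, 7, 1),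
   (3, 3, 1, 1471, 735), (5, 9, 1, 11, 5), (7, 7, 1, 1471, 245), (3, 5, 1, 19, 9),
   (829, 133, 1, 716257, 179064), (3, 5, 1, 19, 9), (167, 273, 1, 18371, 167),
   (839, 361, 3, 176191, 88095), (3, 3, 1, 7, 1), (3, 3, 1, 13, 2), (23, 19, 1, 47, 23),
   (19, 29, 1, 14251, 7125), (3, 5, 1, 547, 91), (5, 5, 1, 41, 10), (3, 5, 1, 13, 2),
   (67, 87, 1, 11257, 84), (877, 1125, 1, 219251, 109625), (3, 3, 1, 7, 3), (3, 3, 1, 7, 3),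
   (7, 3, 1, 2521, 420), (11, 5, 1, 23, 1), (3, 5, 1, 37, 3), (29, 11, 1, 59, 29),
   (3, 5, 1, 1231, 205), (907, 303, 1, 5443, 2721), (11, 21, 1, 9923, 41), (3, 3, 1, 19, 9),
   (3, 3, 1, 7, 1), (13, 15, 1, 53, 26), (929, 1733, 2, 7433, 929), (3, 5, 1, 181, 45),
   (5, 5, 1, 601, 4), (3, 5, 1, 163, 81), (7, 7, 1, 43, 21), (73, 65, 1, 877, 438),
   (3, 3, 1, 13, 2), (3, 3, 1, 7, 1), (7, 5, 1, 29, 14), (5, 5, 1, 31, 5), (3, 5, 1, 11497, 1437),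
   (7, 11, 1, 953, 68), (3, 5, 1, 7, 1), (11, 3, 1, 23, 11), (5, 9, 1, 11, 5), (3, 3, 1, 109, 27),
   (3, 3, 1, 7, 3), (5, 7, 1, 11, 5), (7, 5, 1, 71, 35), (3, 5, 1, 7, 1), (19, 5, 1, 60611, 30305),
   (3, 5, 1, 7, 1), (5, 9, 1, 54001, 13500), (1019, 425, 1, 966013, 80501), (3, 3, 1, 7, 3),
   (3, 3, 1, 37, 3), (1031, 975, 1, 88667, 44333), (5, 5, 1, 11, 5), (3, 5, 1, 7, 1),
   (7, 13, 1, 43, 21), (3, 5, 1, 31, 5), (13, 13, 1, 53, 13), (151, 83, 1, 670139, 47867),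
   (3, 3, 1, 7, 1), (3, 3, 1, 73, 36), (97, 19, 1, 971, 485), (7, 3, 1, 617, 22), (3, 5, 1, 13, 2),
   (13, 21, 1, 131, 65), (3, 5, 1, 43, 3), (1087, 997, 2, 52177, 13044),
   (1091, 1893, 1, 6547, 3273), (3, 3, 1, 7, 1), (3, 3, 1, 31, 15), (5, 7, 1, 71, 35),
   (41, 67, 1, 83, 41), (3, 5, 1, 52153, 6519), (5, 9, 1, 11, 5), (3, 5, 1, 547, 39),
   (1123, 1059, 1, 4493, 2246), (23, 37, 1, 139, 23), (3, 3, 1, 7, 3), (3, 3, 1, 7, 3),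
   (7, 7, 1, 29, 7), (127, 251, 1, 509, 127), (31, 61, 1, 1117, 62), (1151, 2023, 1, 6907, 1151),
   (3, 5, 1, 727, 363), (19, 33, 1, 229, 57), (5, 5, 1, 11, 5), (3, 3, 1, 4789, 2394),
   (3, 3, 1, 7, 1), (11, 9, 1, 89, 11), (131, 207, 1, 787, 393), (3, 5, 1, 31, 5),
   (29, 53, 1, 59, 29), (3, 5, 1, 37, 3), (5, 7, 1, 11, 5), (11, 17, 1, 23, 11), (3, 3, 1, 19, 9),
   (3, 3, 1, 7, 1), (7, 7, 1, 43, 21), (5, 9, 1, 11, 5), (3, 5, 1, 19, 9),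
   (1223, 969, 1, 9446453, 2361613), (3, 5, 1, 7, 1), (137, 117, 2, 6577, 1096), (13, 5, 1, 53, 2),
   (3, 3, 1, 101833, 8486), (3, 3, 1, 7, 3), (29, 35, 1, 59, 29), (139, 13, 1, 1669, 417),
   (3, 5, 1, 7, 1), (13, 11, 1, 677, 169), (3, 5, 1, 7, 1), (7, 3, 1, 127, 63),
   (31, 51, 1, 17981, 899), (3, 3, 1, 7, 3), (3, 3, 1, 19, 9), (5, 9, 1, 11, 5),
   (11, 13, 1, 463, 21), (3, 5, 1, 7, 1), (5, 7, 1, 11, 5), (3, 5, 1, 79, 39), (5, 7, 1, 11, 5),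
   (7, 13, 1, 29, 14), (3, 3, 1, 7, 1), (3, 3, 1, 13, 2), (1319, 1357, 1, 65951, 32975),
   (53, 87, 1, 107, 53), (3, 5, 1, 163, 27), (31, 53, 1, 78989, 19747), (3, 5, 1, 13, 2),
   (13, 9, 1, 79, 13), (17, 9, 1, 103, 17), (3, 3, 1, 7, 1), (3, 3, 1, 61, 10), (23, 5, 1, 47, 1),
   (151, 273, 1, 1511, 755), (3, 5, 1, 19, 9), (1367, 1387, 2, 3116761, 259730), (3, 5, 1, 19, 9),
   (11, 5, 1, 23, 11), (7, 11, 1, 743, 53), (3, 3, 1, 7, 3), (3, 3, 1, 7, 3), (13, 25, 1, 53, 13),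
   (5, 7, 1, 71, 35), (3, 5, 1, 97, 48), (23, 35, 1, 691, 69), (3, 5, 1, 43, 21),
   (83, 89, 1, 167, 83), (5, 9, 1, 11, 5), (3, 3, 1, 13, 2), (3, 3, 1, 7, 1),
   (1427, 817, 1, 119869, 9989), (53, 41, 1, 107, 53), (3, 5, 1, 523, 9), (11, 3, 1, 23, 11),
   (3, 5, 1, 17209, 1434), (23, 23, 1, 6073, 759), (1451, 1025, 1, 2903, 1451), (3, 3, 1, 19, 9),
   (3, 3, 1, 7, 1), (5, 5, 1, 41, 10), (13, 5, 1, 464257, 38688), (3, 5, 1, 13, 2),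
   (7, 3, 1, 113, 8), (3, 5, 1, 7, 1), (5, 9, 1, 33181, 2765), (1489, 2875, 1, 59561, 7445),
   (3, 3, 1, 13, 2), (3, 3, 1, 7, 3), (19, 19, 1, 191, 95), (5, 7, 1, 11, 5), (3, 5, 1, 7, 1),
   (17, 33, 1, 103, 51), (3, 5, 1, 7, 1), (31, 15, 2, 486329, 1961), (61, 121, 1, 8663, 4331),
   (3, 3, 1, 7, 3), (3, 3, 1, 19, 9), (5, 5, 1, 541, 18), (19, 31, 1, 191, 95), (3, 5, 1, 7, 1),
   (7, 5, 1, 43037, 106), (3, 5, 1, 691, 115), (173, 69, 1, 4153, 173), (7, 11, 1, 43, 21),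
   (3, 3, 1, 7, 1), (3, 3, 1, 31, 15), (1571, 1689, 1, 22339621, 11169810), (7, 11, 1, 29, 2),
   (3, 5, 1, 43, 21), (5, 9, 1, 31, 5), (3, 5, 1, 151, 75), (37, 17, 1, 593, 74), (5, 7, 1, 71, 35),
   (3, 3, 1, 7, 1), (3, 3, 1, 199, 99), (1609, 733, 1, 67579, 11263), (179, 345, 1, 80909, 20227),
   (3, 5, 1, 79, 39), (1621, 2051, 3, 8432443, 4216221), (3, 5, 1, 157, 39), (181, 7, 1, 1087, 181),
   (7, 13, 1, 43, 21), (3, 3, 1, 7, 3), (3, 3, 1, 7, 3), (31, 45, 1, 373, 62),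
   (17, 25, 1, 2789, 697), (3, 5, 1, 84313, 21078), (1657, 1343, 2, 3526097, 440762),
   (3, 5, 1, 19, 9), (5, 5, 1, 541, 135), (1667, 2211, 1, 23339, 1667), (3, 3, 1, 733, 183),
   (3, 3, 1, 7, 1), (23, 41, 1, 461, 115), (5, 9, 1, 41, 10), (3, 5, 1, 43, 21),
   (19, 27, 1, 229, 3), (3, 5, 1, 58237, 14559), (7, 13, 1, 43, 21), (5, 7, 1, 41, 10),
   (3, 3, 1, 37, 18), (3, 3, 1, 7, 1), (101, 9, 2, 238361, 59590), (191, 69, 1, 3821, 191),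
   (23, 45, 1, 47, 23), (7, 7, 1, 43, 21), (3, 5, 1, 7, 1), (5, 5, 1, 11, 5), (37, 43, 1, 149, 37),
   (3, 3, 1, 19, 9), (3, 3, 1, 7, 3), (103, 61, 1, 4327, 721), (7, 11, 1, 71, 5), (3, 5, 1, 7, 1),
   (5, 5, 1, 31, 5), (3, 5, 1, 7, 1), (7, 11, 1, 29, 14), (1777, 429, 1, 7109, 1777),
   (3, 3, 1, 7, 3), (3, 3, 1, 13, 2), (1789, 207, 3, 49827229, 4152269), (11, 15, 1, 23, 11),
   (3, 5, 1, 7, 1), (7, 7, 1, 211, 21), (3, 5, 1, 13, 2), (13, 19, 1, 505727, 252863),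
   (1811, 3089, 1, 10867, 1811), (3, 3, 1, 7, 1), (3, 3, 1, 19, 9), (73, 105, 1, 293, 73),
   (7, 13, 1, 1667, 833), (3, 5, 1, 643, 321), (167, 109, 1, 26053, 501), (3, 5, 1, 43, 3),
   (41, 31, 1, 83, 41), (1847, 2731, 1, 147761, 36940), (3, 3, 1, 7, 1), (3, 3, 1, 13, 2),
   (11, 5, 1, 199, 99), (5, 5, 1, 151, 75), (3, 5, 1, 137593, 22932),
   (1871, 1919, 1, 1833581, 65485), (3, 5, 1, 31, 15), (11, 21, 1, 23, 11), (5, 9, 1, 11, 5),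
   (3, 3, 1, 7, 3), (3, 3, 1, 7, 3), (5, 7, 1, 9421, 942), (1901, 3587, 1, 3803, 1901),
   (3, 5, 1, 19, 9), (23, 25, 1, 5521, 552), (3, 5, 1, 19, 9), (5, 9, 1, 11, 5),
   (17, 3, 1, 103, 51), (3, 3, 1, 18013, 9006), (3, 3, 1, 7, 1), (1931, 3625, 1, 23173, 1931),
   (5, 5, 1, 184441, 30740), (3, 5, 1, 13, 2), (29, 13, 1, 59, 29), (3, 5, 1, 2683, 447),
   (7, 11, 1, 2969, 212), (17, 33, 1, 9011, 901), (3, 3, 1, 13, 2), (3, 3, 1, 7, 1),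
   (7, 11, 1, 59053, 9842), (73, 131, 1, 293, 73), (79, 129, 1, 21647, 10823), (7, 5, 1, 911, 65),
   (3, 5, 1, 7, 1), (13, 25, 1, 79, 13), (11, 21, 1, 23, 11), (3, 3, 1, 61, 30), (3, 3, 1, 7, 3),
   (5, 7, 1, 11, 5), (41, 23, 1, 83, 41), (3, 5, 1, 7, 1), (5, 9, 1, 11, 5), (3, 5, 1, 7, 1),
   (7, 13, 1, 71, 5), (2027, 2365, 1, 12163, 6081), (3, 3, 1, 7, 3), (3, 3, 1, 67, 11),
   (13, 9, 1, 79, 39), (227, 283, 1, 58567, 9761)]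

lemma checkRows_low : checkRows 1 rowsLow = true := by decide +kernel

lemma checkRows_high : checkRows 62 rowsHigh = true := by decide +kernel

/-- The case `x = 2` of the equation for `f = 2 * k < 1024`. -/
lemma no_solution_exponent_two_small {k y z : ℕ} (hk : 0 < k) (hk2 : k < 512) (hy : Odd y)
    (hz : Odd z) (hz1 : 1 < z)
    (heq : (12 * k ^ 2 - 1) ^ y + 4 * k ^ 2 = (16 * k ^ 2 - 1) ^ z) : False := by
  have hlow : rowsLow.length = 60 := by decide +kernel
  have hhigh : rowsHigh.length = 450 := by decide +kernel
  rcases Nat.lt_trichotomy k 61 with h | rfl | h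
  · exact no_solution_of_checkRows hy hz hz1 checkRows_low k hk (by omega) heq
  -- for `f = 122` the modulus is a proper prime power
  · exact no_solution_of_certTwo (m := 243) (N := 162) (y₀ := 325) (n := 1) (P := 487) (c := 243)
      (by decide +kernel) hy hz hz1 heq
  · exact no_solution_of_checkRows hy hz hz1 checkRows_high k h (by omega) heq

/-- The case `y = 1` of the equation for odd `f < 17`. -/
lemma no_solution_exponent_one_small {f F B C x z : ℕ} (hf : 1 < f) (hfo : Odd f) (hf17 : f < 17)
    (hF : F = f ^ 2) (hB : B + 1 = 3 * F) (hC : C + 1 = 4 * F) (hz : Odd z)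
    (hzF : (F : ℤ) ∣ 4 * z - 3) (heq : f ^ x + B = C ^ z) : False := by
  obtain rfl : B = 3 * F - 1 := by omega
  obtain rfl : C = 4 * F - 1 := by omega
  subst hF
  have hf2 := Nat.odd_iff.1 hfo
  have h : f = 3 ∨ f = 5 ∨ f = 7 ∨ f = 9 ∨ f = 11 ∨ f = 13 ∨ f = 15 := by
    omega
  rcases h with rfl | rfl | rfl | rfl | rfl | rfl | rfl
  · exact no_solution_of_certOne (z₀ := 3) (n := 2) (P := 73) (c := 12)
      (by decide +kernel) hz hzF heq
  · exact no_solution_of_certOne (z₀ := 7) (n := 1) (P := 3301) (c := 75)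
      (by decide +kernel) hz hzF heq
  · exact no_solution_of_certOne (z₀ := 13) (n := 2) (P := 29) (c := 7)
      (by decide +kernel) hz hzF heq
  · exact no_solution_of_certOne (z₀ := 21) (n := 1) (P := 163) (c := 81)
      (by decide +kernel) hz hzF heq
  · exact no_solution_of_certOne (z₀ := 31) (n := 1) (P := 199) (c := 22)
      (by decide +kernel) hz hzF heq
  · exact no_solution_of_certOne (z₀ := 43) (n := 1) (P := 1223) (c := 611)
      (by decide +kernel) hz hzF heq
  · exact no_solution_of_certOne (z₀ := 57) (n := 1) (P := 7) (c := 1)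
      (by decide +kernel) hz hzF heq

/-! ### Elementary restrictions on the exponents -/

lemma pow_modEq_neg_one_pow {F B k : ℕ} (hB : B + 1 = k * F) (y : ℕ) :
    (B : ℤ) ^ y ≡ (-1) ^ y [ZMOD F] := by
  refine Int.ModEq.pow y ?_
  rw [Int.modEq_comm, Int.modEq_iff_dvd]
  refine ⟨k, ?_⟩
  zify at hB
  linear_combination hB

lemma eleven_pow_mod_eight (y : ℕ) : 11 ^ y % 8 = if Even y then 1 else 3 := by
  induction y with
  | zero => rfl
  | succ y ih =>
    rw [pow_succ, Nat.mul_mod, ih]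
    by_cases h : Even y <;> simp [h, Nat.even_add_one]

lemma fifteen_pow_mod_eight (z : ℕ) : 15 ^ z % 8 = if Even z then 1 else 7 := by
  induction z with
  | zero => rfl
  | succ z ih =>
    rw [pow_succ, Nat.mul_mod, ih]
    by_cases h : Even z <;> simp [h, Nat.even_add_one]

/-- `x = 1` is excluded modulo `f ^ 2` if `f ≥ 3`, and modulo `8` if `f = 2`. -/
lemma exponent_ne_one {f F B C y z : ℕ} (hf : 1 < f) (hF : F = f ^ 2) (hB : B + 1 = 3 * F)
    (hC : C + 1 = 4 * F) (heq : f + B ^ y = C ^ z) : False := by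
  rcases (show 2 ≤ f from hf).eq_or_lt with rfl | hf3
  · obtain rfl : B = 11 := by omega
    obtain rfl : C = 15 := by omega
    have h1 := eleven_pow_mod_eight y
    have h2 := fifteen_pow_mod_eight z
    split_ifs at h1 h2 <;> omega
  · have h1 := pow_modEq_neg_one_pow hB y
    have h2 := pow_modEq_neg_one_pow hC z
    have h3 : (f : ℤ) + B ^ y = C ^ z := by exact_mod_cast heq
    have h4 := ((h1.add_left (f : ℤ)).symm.trans (h3 ▸ h2)).symm.dvd
    have h5 : f + 2 < F := by rw [hF]; nlinarith
    rcases neg_one_pow_eq_or ℤ y with e1 | e1 <;> rcases neg_one_pow_eq_or ℤ z with e2 | e2 <;>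
    · rw [e1, e2] at h4
      have := Int.le_of_dvd (by omega) h4
      omega

lemma even_iff_even {f F B C x y z : ℕ} (hf : 1 < f) (hF : F = f ^ 2) (hB : B + 1 = 3 * F)
    (hC : C + 1 = 4 * F) (hx : 2 ≤ x) (heq : f ^ x + B ^ y = C ^ z) : Even y ↔ Even z := by
  have h1 := pow_modEq_neg_one_pow hB y
  have h2 := pow_modEq_neg_one_pow hC z
  have h3 : (f : ℤ) ^ x + B ^ y = C ^ z := by exact_mod_cast heq
  have h0 : (f : ℤ) ^ x ≡ 0 [ZMOD F] := by
    rw [Int.modEq_zero_iff_dvd, hF]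
    push_cast
    exact pow_dvd_pow _ hx
  have h4 := ((h0.add h1).symm.trans (h3 ▸ h2)).symm.dvd
  have h5 : 4 ≤ F := by rw [hF]; nlinarith
  rcases Nat.even_or_odd y with e1 | e1 <;> rcases Nat.even_or_odd z with e2 | e2
  · exact iff_of_true e1 e2
  · exfalso
    rw [e1.neg_one_pow, e2.neg_one_pow] at h4
    have := Int.le_of_dvd (by omega) h4
    omega
  · exfalso
    rw [e1.neg_one_pow, e2.neg_one_pow, ← dvd_neg] at h4
    have := Int.le_of_dvd (by omega) h4
    omega
  · exact iff_of_false (Nat.not_even_iff_odd.2 e1) (Nat.not_even_iff_odd.2 e2)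

/-- A divisor `W` of a power of `f` that is `± 2` modulo `f ^ 2` has `gcd (W, f) ∣ 2`, so it is a power
of `2`, and it is `2` modulo `4` when `f` is even. -/
lemma divisor_eq_two {f W x : ℕ} (hf : 1 < f) (hW : W ∣ f ^ x)
    (h : ((f ^ 2 : ℕ) : ℤ) ∣ W - 2 ∨ ((f ^ 2 : ℕ) : ℤ) ∣ W + 2) : Even f ∧ W = 2 := by
  have hgcd : ∀ w, w ∣ W → Odd w ∨ Odd f → w.Coprime f := by
    intro w hw ho
    have h1 : ((w.gcd f : ℕ) : ℤ) ∣ W :=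
      Int.natCast_dvd_natCast.2 ((Nat.gcd_dvd_left _ _).trans hw)
    have h2 : ((w.gcd f : ℕ) : ℤ) ∣ ((f ^ 2 : ℕ) : ℤ) :=
      Int.natCast_dvd_natCast.2 ((Nat.gcd_dvd_right _ _).trans (dvd_pow_self f two_ne_zero))
    have h3 : ((w.gcd f : ℕ) : ℤ) ∣ ((2 : ℕ) : ℤ) := by
      rcases h with h | h
      · simpa using dvd_sub h1 (h2.trans h)
      · simpa using dvd_sub (h2.trans h) h1
    rcases (Nat.dvd_prime Nat.prime_two).1 (Int.natCast_dvd_natCast.1 h3) with h4 | h4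
    · exact h4
    · exfalso
      have h5 := Nat.gcd_dvd_left w f
      have h6 := Nat.gcd_dvd_right w f
      rw [h4] at h5 h6
      rcases ho with ho | ho <;> rw [Nat.odd_iff] at ho <;> omega
  rcases Nat.even_or_odd f with hfe | hfo
  · refine ⟨hfe, ?_⟩
    obtain ⟨k, rfl⟩ := hfe
    have h4 : W % 4 = 2 := by
      have h5 : (4 : ℤ) ∣ (((k + k) ^ 2 : ℕ) : ℤ) := ⟨k ^ 2, by push_cast; ring⟩
      rcases h with h | h <;> have := h5.trans h <;> omega
    have h6 : W / 2 ∣ W := Nat.div_dvd_of_dvd (by omega)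
    have h7 := Nat.Coprime.eq_one_of_dvd
      ((hgcd _ h6 (Or.inl (Nat.odd_iff.2 (by omega)))).pow_right x) (h6.trans hW)
    omega
  · exfalso
    have h7 := Nat.Coprime.eq_one_of_dvd ((hgcd W dvd_rfl (Or.inr hfo)).pow_right x) hW
    subst h7
    have h8 : 9 ≤ f ^ 2 := by
      obtain ⟨k, rfl⟩ := hfo
      exact Nat.pow_le_pow_left (show 3 ≤ 2 * k + 1 by omega) 2
    rcases h with h | h
    · rw [← dvd_neg] at h
      have := Int.le_of_dvd (by norm_num) h
      omega
    · have := Int.le_of_dvd (by norm_num) h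
      omega

/-- When both exponents are even, `f ^ x` factors as a difference of squares; modulo `f ^ 2` one
factor is `± 2` and hence equal to `2` by `divisor_eq_two`. The larger factor exceeds `2`, so
the smaller one is `2`, and the parities of the half exponents lead to a contradiction. -/
lemma not_even_exponents {f F B C x y z : ℕ} (hf : 1 < f) (hF : F = f ^ 2) (hB : B + 1 = 3 * F)
    (hC : C + 1 = 4 * F) (hy : 0 < y) (heq : f ^ x + B ^ (y + y) = C ^ (z + z)) : False := by
  have hF4 : 4 ≤ F := by rw [hF]; nlinarith
  have hlt : B ^ y ≤ C ^ z := by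
    refine le_of_lt (lt_of_pow_lt_pow_left₀ 2 (Nat.zero_le _) ?_)
    have : 0 < f ^ x := Nat.pow_pos (by omega)
    rw [← pow_mul, ← pow_mul, mul_two, mul_two]
    omega
  obtain ⟨U, hU⟩ := Nat.exists_eq_add_of_le hlt
  have hfac : f ^ x = U * (C ^ z + B ^ y) := by
    rw [pow_add, pow_add, hU] at heq
    rw [hU]
    linarith
  have h1 := pow_modEq_neg_one_pow hB y
  have h2 := pow_modEq_neg_one_pow hC z
  have hU' : (C : ℤ) ^ z = B ^ y + U := by exact_mod_cast hU
  have hV : C ^ z + B ^ y ≠ 2 := by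
    have : B ≤ B ^ y := Nat.le_self_pow hy.ne' B
    omega
  have hUV : ((C ^ z + B ^ y : ℕ) : ℤ) ≡ (-1) ^ z + (-1) ^ y [ZMOD F] := by
    push_cast
    exact h2.add h1
  have hUU : (U : ℤ) ≡ (-1) ^ z - (-1) ^ y [ZMOD F] := by
    have := h2.sub h1
    rwa [hU', add_sub_cancel_left] at this
  have hVd : C ^ z + B ^ y ∣ f ^ x := ⟨U, by rw [hfac, mul_comm]⟩
  have hUd : U ∣ f ^ x := ⟨_, hfac⟩
  have hCF : (4 * F - 1 : ℤ) = C := by zify at hC; linarith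
  have hBF : (3 * F - 1 : ℤ) = B := by zify at hB; linarith
  rcases Nat.even_or_odd y with e1 | e1 <;> rcases Nat.even_or_odd z with e2 | e2 <;>
    rw [e1.neg_one_pow, e2.neg_one_pow] at hUV hUU
  · exact hV (divisor_eq_two hf hVd (Or.inl (hF ▸ hUV.symm.dvd))).2
  · obtain ⟨-, rfl⟩ := divisor_eq_two hf hUd (Or.inr (hF ▸ by simpa using hUU.symm.dvd))
    have h3 := Int.le_of_dvd (by norm_num) hUU.symm.dvd
    obtain rfl : f = 2 := by
      have : F = 4 := by push_cast at h3; omega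
      nlinarith
    obtain rfl : B = 11 := by omega
    obtain rfl : C = 15 := by omega
    have h4 := eleven_pow_mod_eight y
    have h5 := fifteen_pow_mod_eight z
    rw [if_pos e1] at h4
    rw [if_neg (Nat.not_even_iff_odd.2 e2)] at h5
    omega
  · obtain ⟨hfe, rfl⟩ := divisor_eq_two hf hUd (Or.inl (hF ▸ by simpa using hUU.symm.dvd))
    have h3 := hU'
    rw [← hCF, ← hBF, sub_one_pow_odd _ e1, ← neg_sub (1 : ℤ), e2.neg_pow] at h3
    obtain ⟨c, hc⟩ := one_sub_pow_two (3 * F) y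
    obtain ⟨d, hd⟩ := one_sub_pow_two (4 * F) z
    rw [hc, hd] at h3
    have h4 : (F : ℤ) ∣ 4 * z + 3 * y := by
      refine ⟨16 * d + 9 * c, ?_⟩
      apply mul_left_cancel₀ (show (F : ℤ) ≠ 0 by omega)
      push_cast at h3
      linear_combination (-1) * h3
    have h5 : (2 : ℤ) ∣ F := by
      obtain ⟨k, rfl⟩ := hfe
      exact ⟨2 * k ^ 2, by rw [hF]; push_cast; ring⟩
    have h6 := h5.trans h4
    rw [Nat.odd_iff] at e1
    omega
  · exact hV (divisor_eq_two hf hVd (Or.inr (hF ▸ by simpa using hUV.symm.dvd))).2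

/-- Reduction modulo `f ^ 3` gives `f ∣ 4 z - 3 y`, which is odd. -/
lemma exponent_eq_two_of_even {f F B C x y z : ℕ} (hf : 1 < f) (hfe : Even f) (hF : F = f ^ 2)
    (hB : B + 1 = 3 * F) (hC : C + 1 = 4 * F) (hx : 3 ≤ x) (hy : Odd y) (hz : Odd z)
    (heq : f ^ x + B ^ y = C ^ z) : False := by
  have hCF : (4 * F - 1 : ℤ) = C := by zify at hC; linarith
  have hBF : (3 * F - 1 : ℤ) = B := by zify at hB; linarith
  have h3 : (f : ℤ) ^ x + B ^ y = C ^ z := by exact_mod_cast heq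
  obtain ⟨k, rfl⟩ := Nat.exists_eq_add_of_le hx
  rw [← hCF, ← hBF, sub_one_pow_odd _ hy, sub_one_pow_odd _ hz] at h3
  obtain ⟨c, hc⟩ := one_sub_pow_two (3 * F) y
  obtain ⟨d, hd⟩ := one_sub_pow_two (4 * F) z
  rw [hc, hd] at h3
  have hF' : (F : ℤ) = f ^ 2 := by rw [hF]; push_cast; rfl
  have h4 : (f : ℤ) ∣ 4 * z - 3 * y := by
    refine ⟨f ^ k - 9 * f * c + 16 * f * d, ?_⟩
    apply mul_left_cancel₀ (show (f : ℤ) ^ 2 ≠ 0 by positivity)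
    rw [hF'] at h3
    linear_combination (-1) * h3
  have h5 : (2 : ℤ) ∣ f := by exact_mod_cast hfe.two_dvd
  have h6 := h5.trans h4
  rw [Nat.odd_iff] at hy
  omega

lemma odd_pow_mod_eight {a n : ℕ} (ha : Odd a) (hn : Odd n) : a ^ n % 8 = a % 8 := by
  obtain ⟨k, rfl⟩ := hn
  have h1 : a ^ 2 % 8 = 1 := by
    have h2 := Nat.odd_iff.1 ha
    have h3 : a % 8 = 1 ∨ a % 8 = 3 ∨ a % 8 = 5 ∨ a % 8 = 7 := by omega
    rcases h3 with h | h | h | h <;> rw [Nat.pow_mod, h]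
  have h4 : (a ^ 2) ^ k * a ≡ 1 ^ k * a [MOD 8] :=
    (Nat.ModEq.pow k (show a ^ 2 ≡ 1 [MOD 8] from h1)).mul_right a
  rwa [one_pow, one_mul, ← pow_mul, ← pow_succ] at h4

/-- For odd `f` and `y > 1`, reduction modulo `8` gives `f ≡ 3` and `x` odd. Let `q = 2 f - 1`, a
divisor of `C`. The equation gives `f ^ x ≡ f ^ (2 y)` modulo `q`, so that the Jacobi symbol `(f / q)`
is `1`; hence so is `(2 / q)`, as `2 f ≡ 1`. But `q ≡ 5` modulo `8`. -/
lemma exponent_eq_one_of_odd {f F B C x y z : ℕ} (hf : 1 < f) (hfo : Odd f) (hF : F = f ^ 2)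
    (hB : B + 1 = 3 * F) (hC : C + 1 = 4 * F) (hy : Odd y) (hy3 : 3 ≤ y) (hz : Odd z)
    (heq : f ^ x + B ^ y = C ^ z) : False := by
  have hF8 : F % 8 = 1 := by
    have h2 := Nat.odd_iff.1 hfo
    have h3 : f % 8 = 1 ∨ f % 8 = 3 ∨ f % 8 = 5 ∨ f % 8 = 7 := by omega
    rcases h3 with h | h | h | h <;> rw [hF, Nat.pow_mod, h]
  have hB8 : B ^ y % 8 = 0 := by
    have h1 : 2 ∣ B := by omega
    exact Nat.mod_eq_zero_of_dvd ((pow_dvd_pow_of_dvd h1 3).trans (pow_dvd_pow _ hy3))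
  have hC8 : C ^ z % 8 = 3 := by
    rw [odd_pow_mod_eight (Nat.odd_iff.2 (by omega)) hz]
    omega
  have hfx : f ^ x % 8 = 3 := by omega
  have hxo : Odd x := by
    by_contra hxe
    obtain ⟨k, rfl⟩ := Nat.not_odd_iff_even.1 hxe
    have h4 : (f ^ 2) ^ k ≡ 1 ^ k [MOD 8] := Nat.ModEq.pow k (hF ▸ hF8)
    rw [one_pow, ← pow_mul, two_mul, Nat.ModEq, hfx] at h4
    omega
  have hf8 : f % 8 = 3 := by rw [← hfx, odd_pow_mod_eight hfo hxo]
  obtain ⟨q, hq⟩ : ∃ q, q + 1 = 2 * f := ⟨2 * f - 1, by omega⟩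
  have hqo : Odd q := Nat.odd_iff.2 (by omega)
  have hcop : Int.gcd f q = 1 := by
    rw [Int.gcd_natCast_natCast]
    have h1 := (Nat.gcd_dvd_left f q).mul_left 2
    rw [← hq] at h1
    exact Nat.dvd_one.1 ((Nat.dvd_add_right (Nat.gcd_dvd_right f q)).1 h1)
  have hmod : (f : ℤ) ^ x ≡ (f ^ y) ^ 2 [ZMOD q] := by
    have h1 : (f : ℤ) ^ x + B ^ y = C ^ z := by exact_mod_cast heq
    have h2 : (C : ℤ) ≡ 0 [ZMOD q] := by
      rw [Int.modEq_zero_iff_dvd]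
      refine ⟨2 * f + 1, ?_⟩
      zify at hC hF hq
      linear_combination hC + 4 * hF - (2 * f + 1) * hq
    have h3 : (B : ℤ) ≡ -F [ZMOD q] := by
      have : (B : ℤ) = C - F := by omega
      rw [this]
      simpa using h2.sub_right (F : ℤ)
    have h4 := h3.pow y
    have h5 := h2.pow z
    rw [hy.neg_pow] at h4
    rw [zero_pow hz.pos.ne', ← h1] at h5
    have h6 := h5.sub h4
    rw [hF] at h6
    push_cast at h6
    rw [← pow_mul, mul_comm, pow_mul]
    simpa using h6
  have hJ : jacobiSym f q = 1 := by
    have h1 := jacobiSym.mod_left' hmod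
    rw [jacobiSym.pow_left, jacobiSym.pow_left, jacobiSym.pow_left] at h1
    rcases jacobiSym.eq_one_or_neg_one hcop with h2 | h2
    · exact h2
    · rw [h2, hxo.neg_one_pow, hy.neg_one_pow] at h1
      norm_num at h1
  have hJ2 : jacobiSym 2 q = 1 := by
    have h1 : (2 * f : ℤ) ≡ 1 [ZMOD q] := by
      rw [Int.modEq_comm, Int.modEq_iff_dvd]
      exact ⟨1, by zify at hq; linarith⟩
    have h2 := jacobiSym.mod_left' h1
    rw [jacobiSym.mul_left, hJ, jacobiSym.one_left, mul_one] at h2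
    exact h2
  rw [jacobiSym.at_two hqo, ZMod.χ₈_nat_mod_eight, show q % 8 = 5 by omega] at hJ2
  revert hJ2
  decide

/-! ### The equation -/

theorem stmt_18 (f : ℕ) (hf : 1 < f)
    (x y z : ℕ) (hx : 0 < x) (hy : 0 < y) (hz : 0 < z) :
    f ^ x + (3 * f ^ 2 - 1) ^ y = (4 * f ^ 2 - 1) ^ z ↔ (x, y, z) = (2, 1, 1) := by
  have hf4 : 4 ≤ f ^ 2 := Nat.pow_le_pow_left (show 2 ≤ f from hf) 2
  obtain ⟨F, hF⟩ : ∃ F, F = f ^ 2 := ⟨_, rfl⟩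
  obtain ⟨B, hB'⟩ : ∃ B, B = 3 * f ^ 2 - 1 := ⟨_, rfl⟩
  obtain ⟨C, hC'⟩ : ∃ C, C = 4 * f ^ 2 - 1 := ⟨_, rfl⟩
  have hB : B + 1 = 3 * F := by omega
  have hC : C + 1 = 4 * F := by omega
  rw [← hB', ← hC', Prod.mk.injEq, Prod.mk.injEq]
  constructor
  · intro heq
    have hx2 : 2 ≤ x := by
      by_contra! h
      obtain rfl : x = 1 := by omega
      rw [pow_one] at heq
      exact exponent_ne_one hf hF hB hC heq
    have hpar := even_iff_even hf hF hB hC hx2 heq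
    rcases Nat.even_or_odd y with hye | hyo
    · obtain ⟨z', rfl⟩ := hpar.1 hye
      obtain ⟨y', rfl⟩ := hye
      exact (not_even_exponents hf hF hB hC (by omega) heq).elim
    have hzo : Odd z := by
      rw [← Nat.not_even_iff_odd, ← hpar, Nat.not_even_iff_odd]
      exact hyo
    have hz1 : z = 1 ∨ 1 < z := by omega
    rcases Nat.even_or_odd f with hfe | hfo
    · obtain rfl : x = 2 := by
        by_contra h
        exact exponent_eq_two_of_even hf hfe hF hB hC (by omega) hyo hzo heq
      rcases hz1 with rfl | hz1
      · refine ⟨rfl, Nat.pow_right_injective (show 2 ≤ B by omega) ?_, rfl⟩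
        show B ^ y = B ^ 1
        rw [pow_one] at heq ⊢
        omega
      · exfalso
        rw [add_comm, ← hF] at heq
        rcases lt_or_ge f 1024 with hlt | hge
        · obtain ⟨k, rfl⟩ := hfe
          refine no_solution_exponent_two_small (k := k) (by omega) (by omega) hyo hzo hz1 ?_
          obtain rfl : F = 4 * k ^ 2 := by rw [hF]; ring
          obtain rfl : B = 12 * k ^ 2 - 1 := by omega
          obtain rfl : C = 16 * k ^ 2 - 1 := by omega
          exact heq
        · refine no_solution_exponent_two_large ?_ hB hC hyo hzo hz1 heq
          rw [hF]
          exact Nat.pow_le_pow_left hge 2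
    · obtain rfl : y = 1 := by
        by_contra h
        have := Nat.odd_iff.1 hyo
        exact exponent_eq_one_of_odd hf hfo hF hB hC hyo (by omega) hzo heq
      rw [pow_one] at heq
      rcases hz1 with rfl | hz1
      · refine ⟨Nat.pow_right_injective (show 2 ≤ f from hf) ?_, rfl, rfl⟩
        show f ^ x = f ^ 2
        rw [pow_one] at heq
        omega
      · exfalso
        have hxz := pow_two_mul_le hf (show f ^ 2 + B = C by omega) hz heq
        rcases lt_or_ge f 17 with hlt | hge
        · exact no_solution_exponent_one_small hf hfo hlt hF hB hC hzo
            (hF ▸ four_mul_exponent_dvd hf hF hB hC hzo heq le_rfl (by omega)) heq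
        · exact no_solution_exponent_one_large hge hF hB hC (by omega) hzo hz1 heq
  · rintro ⟨rfl, rfl, rfl⟩
    rw [pow_one, pow_one]
    omega
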